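/- Let Q(x) = Σ_{ω∈Ω} q_ω e^{2πi x ω} with q_ω ∈ ℂ, Σ_{ω∈Ω} |q_ω| < ∞, Ω a bounded countable subset of ℝ, whose entire extension Q(z) is not identically zero and has only real zeros, and let A be the multiset of zeros of Q counted with multiplicity. Then the Fourier transform μ̂_A of μ_A = Σ_{a∈A} δ_a is a pure point measure, and for every s > 0 there exists a constant C(s) such that |μ̂_A|((−r, r)) ≤ C(s) e^{2πsr} for all r > 0. -/

import Mathlib

open MeasureTheory Metric Filter Topology Complex SchwartzMap Bornology
open scoped ENNReal

noncomputable section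

/-- A continuous function `g` is *Bohr almost periodic* if for every `ε > 0` its set of
`ε`-almost periods is relatively dense. -/
def IsBohrAP {V : Type*} [SeminormedAddCommGroup V] (g : V → ℂ) : Prop :=
  Continuous g ∧ ∀ ε : ℝ, 0 < ε → ∃ L : ℝ, 0 < L ∧ ∀ x : V, ∃ τ : V,
    dist τ x < L ∧ ∀ y : V, ‖g (y + τ) - g y‖ < ε

/-- A pure point complex measure on `V`, described by its (countably supported) mass function. -/
structure PPM (V : Type*) where
  mass : V → ℂ
  countable : (Function.support mass).Countable

namespace PPM

variable {V : Type*}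

/-- The total variation of a pure point measure, evaluated on a set. -/
def var (μ : PPM V) (A : Set V) : ℝ≥0∞ := ∑' x : A, (‖μ.mass x‖₊ : ℝ≥0∞)

/-- Pairing of a pure point measure with a test function: `∫ φ dμ = Σ_x μ{x}·φ(x)`. -/
def pair (μ : PPM V) (φ : V → ℂ) : ℂ := ∑' x, μ.mass x * φ x

/-- Convolution `(μ ⋆ ψ)(t) = ∫ ψ(t - x) dμ(x)`. -/
def conv [SubtractionMonoid V] (μ : PPM V) (ψ : V → ℂ) (t : V) : ℂ :=
  ∑' x, μ.mass x * ψ (t - x)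

end PPM

/-- Local finiteness of a pure point measure on `ℝ`. -/
def PPM.locFinite (μ : PPM ℝ) : Prop := ∀ r : ℝ, μ.var (ball 0 r) < ⊤

/-- The measure is a temperate distribution: it pairs (absolutely) with every Schwartz
function. -/
def PPM.temperate (μ : PPM ℝ) : Prop :=
  ∀ φ : SchwartzMap ℝ ℂ, Summable fun x => μ.mass x * φ x

/-- `ν` is the distributional Fourier transform of `μ`: `μ(φ̂) = ν(φ)` on test functions. -/
def IsFT (μ ν : PPM ℝ) : Prop :=
  ∀ φ : SchwartzMap ℝ ℂ, HasCompactSupport φ →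
    μ.pair ⇑(FourierTransform.fourierCLE ℂ (SchwartzMap ℝ ℂ) φ) = ν.pair ⇑φ

/-- The measure is integer-valued: `μ = Σ_n δ_{a_n}` for a multiset `A = {a_n}`, the mass of
each point being its multiplicity. -/
def PPM.natValued (μ : PPM ℝ) : Prop := ∀ x : ℝ, ∃ k : ℕ, μ.mass x = k

/-- The value at `z ∈ ℂ` of (the entire extension of) the Dirichlet series
`Σ_ω q_ω e^{2πi z ω}`. -/
def dserC (q : ℕ → ℂ) (ω : ℕ → ℝ) (z : ℂ) : ℂ :=
  ∑' i : ℕ, q i * Complex.exp (2 * Real.pi * Complex.I * z * (ω i : ℂ))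

/-- `μ` is the counting measure of the zero multiset of the entire function `Q`: the mass of
`μ` at each real point `x` is the multiplicity of `x` as a zero of `Q`. -/
def IsZeroCounting (Q : ℂ → ℂ) (μ : PPM ℝ) : Prop :=
  ∀ x : ℝ, ∃ (k : ℕ) (g : ℂ → ℂ), μ.mass x = k ∧ (∀ z, AnalyticAt ℂ g z) ∧ g x ≠ 0 ∧
    ∀ z : ℂ, Q z = (z - (x : ℂ)) ^ k * g z

/-! At a fixed distance `s` from the real axis, `Q` is bounded away from zero: translates of `Q`
along the strip have locally uniform limits, which do not vanish identically and, by Hurwitz, have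
no zeros off the real axis. Wiener's lemma then makes `Q'/Q` an absolutely convergent series
`∑ c γ e^{2πiγx}` on the line `Im z = -s` and `∑ d γ e^{2πiγx}` on `Im z = s`. Summing the residues
of `Q'/Q · φ̂` over the strip between the two lines gives
`2πi ∑ φ̂(a) = ∫_{Im z = -s} (Q'/Q) φ̂ - ∫_{Im z = s} (Q'/Q) φ̂`,
and termwise Fourier inversion on the two lines identifies `μ̂_A` as the measure with masses
`(2πi)⁻¹ (c γ e^{-2πsγ} - d γ e^{2πsγ})`. The growth bound is then the summability of `c` and `d`,
for every `s`, because `μ̂_A` does not depend on `s`. -/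

open scoped FourierTransform

/-- `WienerNormLE F N` says that `F` is an absolutely convergent generalized trigonometric series
`∑ γ, c γ e^{2πiγx}` with `∑ γ, ‖c γ‖ ≤ N`, that is, an element of norm at most `N` of the Wiener
algebra of almost periodic functions. Frequencies index the series, so the sums run over all of
`ℝ` but have countable support. -/
def WienerNormLE (F : ℝ → ℂ) (N : ℝ) : Prop :=
  ∃ c : ℝ → ℂ, (Summable fun γ => ‖c γ‖) ∧ ∑' γ, ‖c γ‖ ≤ N ∧
    ∀ x, HasSum (fun γ => c γ * 𝐞 (γ * x)) (F x)

theorem summable_norm_mul_fourierChar {ι : Type*} {c : ι → ℂ} (hc : Summable fun i => ‖c i‖)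
    (w : ι → ℝ) (x : ℝ) : Summable fun i => ‖c i * (𝐞 (w i * x) : ℂ)‖ := by
  simpa only [norm_mul, Circle.norm_coe, mul_one] using hc

namespace WienerNormLE

variable {F G : ℝ → ℂ} {N M : ℝ}

theorem of_hasSum {ι : Type*} {c : ι → ℂ} (hc : Summable fun i => ‖c i‖) {w : ι → ℝ}
    (hF : ∀ x, HasSum (fun i => c i * 𝐞 (w i * x)) (F x)) : WienerNormLE F (∑' i, ‖c i‖) := by
  have hfib : HasSum (fun γ => ∑' i : w ⁻¹' {γ}, ‖c i‖) (∑' i, ‖c i‖) :=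
    hc.hasSum.tsum_fiberwise w
  have hle : ∀ γ, ‖∑' i : w ⁻¹' {γ}, c i‖ ≤ ∑' i : w ⁻¹' {γ}, ‖c i‖ := fun γ =>
    norm_tsum_le_tsum_norm (hc.subtype _)
  have hsum : Summable fun γ => ‖∑' i : w ⁻¹' {γ}, c i‖ :=
    .of_nonneg_of_le (fun _ => norm_nonneg _) hle hfib.summable
  refine ⟨fun γ => ∑' i : w ⁻¹' {γ}, c i, hsum, ?_, fun x => ?_⟩
  · exact (hsum.tsum_le_tsum hle hfib.summable).trans_eq hfib.tsum_eq
  · have hterm : ∀ γ, (∑' i : w ⁻¹' {γ}, c i) * (𝐞 (γ * x) : ℂ) =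
        ∑' i : w ⁻¹' {γ}, c i * 𝐞 (w i * x) := fun γ => by
      rw [← tsum_mul_right]
      exact tsum_congr fun i => by rw [show w i = γ from i.2]
    simpa only [hterm] using (hF x).tsum_fiberwise w

theorem mono (hF : WienerNormLE F N) (hNM : N ≤ M) : WienerNormLE F M := by
  obtain ⟨c, hc, hcN, hcF⟩ := hF
  exact ⟨c, hc, hcN.trans hNM, hcF⟩

theorem nonneg (hF : WienerNormLE F N) : 0 ≤ N := by
  obtain ⟨c, -, hcN, -⟩ := hF
  exact (tsum_nonneg fun _ => norm_nonneg _).trans hcN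

theorem norm_le (hF : WienerNormLE F N) (x : ℝ) : ‖F x‖ ≤ N := by
  obtain ⟨c, hc, hcN, hcF⟩ := hF
  rw [← (hcF x).tsum_eq]
  refine (norm_tsum_le_tsum_norm (summable_norm_mul_fourierChar hc _ x)).trans ?_
  simpa only [norm_mul, Circle.norm_coe, mul_one] using hcN

theorem single (a : ℂ) (γ : ℝ) : WienerNormLE (fun x => a * 𝐞 (γ * x)) ‖a‖ := by
  simpa using of_hasSum (ι := Unit) (c := fun _ => a) (w := fun _ => γ) .of_finite
    fun x => hasSum_unique _

theorem const (a : ℂ) : WienerNormLE (fun _ => a) ‖a‖ := by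
  simpa using single a 0

theorem add (hF : WienerNormLE F N) (hG : WienerNormLE G M) :
    WienerNormLE (fun x => F x + G x) (N + M) := by
  obtain ⟨c, hc, hcN, hcF⟩ := hF
  obtain ⟨d, hd, hdM, hdG⟩ := hG
  refine ⟨c + d, .of_nonneg_of_le (fun _ => norm_nonneg _) (fun γ => norm_add_le _ _) (hc.add hd),
    ?_, fun x => ?_⟩
  · refine (Summable.tsum_le_tsum (fun γ => norm_add_le (c γ) (d γ)) ?_ (hc.add hd)).trans ?_
    · exact .of_nonneg_of_le (fun _ => norm_nonneg _) (fun γ => norm_add_le _ _) (hc.add hd)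
    · rw [hc.tsum_add hd]
      exact add_le_add hcN hdM
  · simpa only [Pi.add_apply, add_mul] using (hcF x).add (hdG x)

theorem mul (hF : WienerNormLE F N) (hG : WienerNormLE G M) :
    WienerNormLE (fun x => F x * G x) (N * M) := by
  have hN := hF.nonneg
  obtain ⟨c, hc, hcN, hcF⟩ := hF
  obtain ⟨d, hd, hdM, hdG⟩ := hG
  have hcd : Summable fun p : ℝ × ℝ => ‖c p.1 * d p.2‖ := hc.mul_norm hd
  have hsum : ∀ x, HasSum (fun p : ℝ × ℝ => c p.1 * d p.2 * 𝐞 ((p.1 + p.2) * x)) (F x * G x) := by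
    intro x
    simpa only [add_mul, AddChar.map_add_eq_mul, Circle.coe_mul, mul_mul_mul_comm] using
      (hcF x).mul (hdG x) (summable_mul_of_summable_norm
        (f := fun γ => c γ * (𝐞 (γ * x) : ℂ)) (g := fun γ => d γ * (𝐞 (γ * x) : ℂ))
        (summable_norm_mul_fourierChar hc _ x) (summable_norm_mul_fourierChar hd _ x))
  refine (of_hasSum hcd hsum).mono ?_
  calc ∑' p : ℝ × ℝ, ‖c p.1 * d p.2‖ = (∑' γ, ‖c γ‖) * ∑' γ, ‖d γ‖ := by
        simp only [norm_mul] at hcd ⊢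
        exact (hc.tsum_mul_tsum hd hcd).symm
    _ ≤ N * M := mul_le_mul hcN hdM (tsum_nonneg fun _ => norm_nonneg _) hN

theorem conj (hF : WienerNormLE F N) : WienerNormLE (fun x => starRingEnd ℂ (F x)) N := by
  obtain ⟨c, hc, hcN, hcF⟩ := hF
  have hconj : ∀ x, HasSum (fun γ => starRingEnd ℂ (c γ) * 𝐞 (-γ * x)) (starRingEnd ℂ (F x)) := by
    intro x
    simpa only [_root_.map_mul, neg_mul, AddChar.map_neg_eq_inv, Circle.coe_inv_eq_conj] using
      Complex.hasSum_conj'.2 (hcF x)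
  refine (of_hasSum (by simpa only [RCLike.norm_conj] using hc) hconj).mono ?_
  simpa only [RCLike.norm_conj] using hcN

theorem pow (hF : WienerNormLE F N) (n : ℕ) : WienerNormLE (fun x => F x ^ n) (N ^ n) := by
  induction n with
  | zero => simpa using const 1
  | succ n ih => simpa only [pow_succ] using ih.mul hF

theorem finsetSum {ι : Type*} (s : Finset ι) {F : ι → ℝ → ℂ} {N : ι → ℝ}
    (hF : ∀ i ∈ s, WienerNormLE (F i) (N i)) :
    WienerNormLE (fun x => ∑ i ∈ s, F i x) (∑ i ∈ s, N i) := by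
  classical
  induction s using Finset.induction_on with
  | empty => simpa using const 0
  | insert a s ha ih =>
    simp only [Finset.sum_insert ha]
    exact (hF a (Finset.mem_insert_self a s)).add
      (ih fun i hi => hF i (Finset.mem_insert_of_mem hi))

theorem hasSum {ι : Type*} {F : ι → ℝ → ℂ} {N : ι → ℝ} (hF : ∀ i, WienerNormLE (F i) (N i))
    (hN : Summable N) (hG : ∀ x, HasSum (fun i => F i x) (G x)) : WienerNormLE G (∑' i, N i) := by
  choose c hc hcN hcF using hF
  have hrows : Summable fun i => ∑' γ, ‖c i γ‖ :=
    .of_nonneg_of_le (fun i => tsum_nonneg fun _ => norm_nonneg _) hcN hN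
  have hsum : Summable fun p : ι × ℝ => ‖c p.1 p.2‖ :=
    (summable_prod_of_nonneg fun _ => norm_nonneg _).2 ⟨hc, hrows⟩
  refine (of_hasSum (c := fun p : ι × ℝ => c p.1 p.2) (w := Prod.snd) hsum fun x => ?_).mono ?_
  · have hterm : Summable fun p : ι × ℝ => c p.1 p.2 * (𝐞 (p.2 * x) : ℂ) :=
      (summable_norm_mul_fourierChar hsum Prod.snd x).of_norm
    rw [(hG x).unique (hterm.hasSum.prod_fiberwise fun i => hcF i x)]
    exact hterm.hasSum
  · rw [hsum.tsum_prod' hc]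
    exact hrows.tsum_le_tsum hcN hN

end WienerNormLE

theorem tendsto_average_fourierChar (γ : ℝ) :
    Tendsto (fun T : ℝ => (T : ℂ)⁻¹ * ∫ x in (0 : ℝ)..T, (𝐞 (γ * x) : ℂ)) atTop
      (𝓝 (if γ = 0 then 1 else 0)) := by
  split_ifs with hγ
  · refine tendsto_const_nhds.congr' ?_
    filter_upwards [eventually_ne_atTop 0] with T hT
    simp [hγ, hT]
  · have hc : (2 * Real.pi * γ * I : ℂ) ≠ 0 := by simp [hγ, Real.pi_ne_zero]
    have hexp : ∀ x : ℝ, (𝐞 (γ * x) : ℂ) = Complex.exp (2 * Real.pi * γ * I * x) := fun x => by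
      rw [Real.fourierChar_apply]
      push_cast
      ring_nf
    have hlim := tendsto_inv_atTop_zero.mul_const (2 / ‖(2 * Real.pi * γ * I : ℂ)‖)
    rw [zero_mul] at hlim
    refine squeeze_zero_norm' ?_ hlim
    filter_upwards [eventually_gt_atTop 0] with T hT
    rw [norm_mul, norm_inv, Complex.norm_real, Real.norm_of_nonneg hT.le]
    simp_rw [hexp]
    rw [integral_exp_mul_complex hc, ← hexp, ← hexp, norm_div]
    gcongr
    refine (norm_sub_le _ _).trans ?_
    rw [Circle.norm_coe, Circle.norm_coe, one_add_one_eq_two]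

theorem norm_coeff_le_of_norm_trigPoly_le {Γ : Finset ℝ} {b : ℝ → ℂ} {M : ℝ}
    (hM : ∀ x, ‖∑ γ ∈ Γ, b γ * 𝐞 (γ * x)‖ ≤ M) {η : ℝ} (hη : η ∈ Γ) : ‖b η‖ ≤ M := by
  have hint : ∀ T : ℝ, (T : ℂ)⁻¹ * ∫ x in (0 : ℝ)..T, (∑ γ ∈ Γ, b γ * 𝐞 (γ * x)) * 𝐞 (-η * x) =
      ∑ γ ∈ Γ, b γ * ((T : ℂ)⁻¹ * ∫ x in (0 : ℝ)..T, (𝐞 ((γ - η) * x) : ℂ)) := by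
    intro T
    have hterm : ∀ x : ℝ, (∑ γ ∈ Γ, b γ * 𝐞 (γ * x)) * 𝐞 (-η * x) =
        ∑ γ ∈ Γ, b γ * 𝐞 ((γ - η) * x) := fun x => by
      simp only [Finset.sum_mul, mul_assoc, ← Circle.coe_mul, ← AddChar.map_add_eq_mul, ← add_mul,
        sub_eq_add_neg]
    simp only [hterm]
    rw [intervalIntegral.integral_finsetSum
      fun γ _ => Continuous.intervalIntegrable (by fun_prop) _ _, Finset.mul_sum]
    refine Finset.sum_congr rfl fun γ _ => ?_
    rw [intervalIntegral.integral_const_mul]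
    ring
  have hlim : Tendsto (fun T : ℝ =>
      (T : ℂ)⁻¹ * ∫ x in (0 : ℝ)..T, (∑ γ ∈ Γ, b γ * 𝐞 (γ * x)) * 𝐞 (-η * x)) atTop (𝓝 (b η)) := by
    simp only [hint]
    have := tendsto_finsetSum Γ fun γ _ => (tendsto_average_fourierChar (γ - η)).const_mul (b γ)
    simpa [sub_eq_zero, hη] using this
  refine le_of_tendsto hlim.norm ?_
  filter_upwards [eventually_gt_atTop 0] with T hT
  have hbound : ‖∫ x in (0 : ℝ)..T, (∑ γ ∈ Γ, b γ * 𝐞 (γ * x)) * 𝐞 (-η * x)‖ ≤ M * |T - 0| :=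
    intervalIntegral.norm_integral_le_of_norm_le_const fun x _ => by
      rw [norm_mul, Circle.norm_coe, mul_one]
      exact hM x
  rw [sub_zero, abs_of_pos hT] at hbound
  rw [norm_mul, norm_inv, Complex.norm_real, Real.norm_of_nonneg hT.le]
  exact (inv_mul_le_iff₀ hT).2 (hbound.trans_eq (mul_comm _ _))

theorem card_piAntidiag_le {ι : Type*} [DecidableEq ι] (s : Finset ι) (n : ℕ) :
    (s.piAntidiag n).card ≤ (n + 1) ^ s.card := by
  calc (s.piAntidiag n).card ≤ (s.pi fun _ => Finset.range (n + 1)).card := by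
        refine Finset.card_le_card_of_injOn (fun α i _ => α i) (fun α hα => ?_) ?_
        · rw [Finset.mem_coe, Finset.mem_piAntidiag] at hα
          rw [Finset.mem_coe, Finset.mem_pi]
          intro i hi
          rw [Finset.mem_range, Nat.lt_succ_iff, ← hα.1]
          exact Finset.single_le_sum (fun _ _ => Nat.zero_le _) hi
        · intro α hα β hβ hαβ
          rw [Finset.mem_coe, Finset.mem_piAntidiag] at hα hβ
          funext i
          by_cases hi : i ∈ s
          · exact congrFun (congrFun hαβ i) hi
          · rw [not_imp_comm.1 (hα.2 i) hi, not_imp_comm.1 (hβ.2 i) hi]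
    _ = (n + 1) ^ s.card := by
        rw [Finset.card_pi, Finset.prod_const, Finset.card_range]

theorem exists_add_one_pow_mul_pow_le (d : ℕ) {a r : ℝ} (ha : 0 < a) (har : a < r) :
    ∃ C : ℝ, ∀ n : ℕ, ((n : ℝ) + 1) ^ d * a ^ n ≤ C * r ^ n := by
  have hr : 0 < r := ha.trans har
  have hlittle := isLittleO_pow_const_mul_const_pow_const_pow_of_norm_lt (R := ℝ) d
    (r₁ := a) (r₂ := r) (by rwa [Real.norm_of_nonneg ha.le])
  obtain ⟨C, -, hC⟩ := Asymptotics.bound_of_isBigO_nat_atTop hlittle.isBigO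
  refine ⟨C * r / a, fun n => ?_⟩
  have h := hC (x := n + 1) (by positivity)
  rw [Real.norm_of_nonneg (by positivity), Real.norm_of_nonneg (by positivity)] at h
  rw [div_mul_eq_mul_div, le_div_iff₀ ha]
  calc ((n : ℝ) + 1) ^ d * a ^ n * a = ((n + 1 : ℕ) : ℝ) ^ d * a ^ (n + 1) := by push_cast; ring
    _ ≤ C * r ^ (n + 1) := h
    _ = C * r * r ^ n := by ring

namespace WienerNormLE

variable {F : ℝ → ℂ} {N : ℝ}

theorem trigPoly_of_norm_le {ι : Type*} (s : Finset ι) (b : ι → ℂ) (w : ι → ℝ) {M : ℝ}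
    (hM : ∀ x, ‖∑ i ∈ s, b i * 𝐞 (w i * x)‖ ≤ M) :
    WienerNormLE (fun x => ∑ i ∈ s, b i * 𝐞 (w i * x)) (s.card * M) := by
  classical
  have hM0 : 0 ≤ M := (norm_nonneg _).trans (hM 0)
  have hfib : ∀ x : ℝ, ∑ i ∈ s, b i * (𝐞 (w i * x) : ℂ) =
      ∑ γ ∈ s.image w, (∑ i ∈ s with w i = γ, b i) * 𝐞 (γ * x) := by
    intro x
    rw [← Finset.sum_fiberwise_of_maps_to (t := s.image w) (g := w)
      fun i hi => Finset.mem_image_of_mem w hi]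
    refine Finset.sum_congr rfl fun γ _ => ?_
    rw [Finset.sum_mul]
    exact Finset.sum_congr rfl fun i hi => by rw [(Finset.mem_filter.1 hi).2]
  simp only [hfib] at hM ⊢
  refine (finsetSum (N := fun _ => M) _ fun γ hγ =>
    (single _ γ).mono (norm_coeff_le_of_norm_trigPoly_le hM hγ)).mono ?_
  rw [Finset.sum_const, nsmul_eq_mul]
  gcongr
  exact Finset.card_image_le

/-- The sup norm, not the Wiener norm, governs the growth: the `n`-th power has only polynomially
many frequencies, and each of its coefficients is at most `M ^ n`. -/
theorem trigPoly_pow (Γ : Finset ℝ) (c : ℝ → ℂ) {M : ℝ}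
    (hM : ∀ x, ‖∑ γ ∈ Γ, c γ * 𝐞 (γ * x)‖ ≤ M) (n : ℕ) :
    WienerNormLE (fun x => (∑ γ ∈ Γ, c γ * 𝐞 (γ * x)) ^ n) (((n : ℝ) + 1) ^ Γ.card * M ^ n) := by
  have hM0 : 0 ≤ M := (norm_nonneg _).trans (hM 0)
  have hexp : ∀ x : ℝ, (∑ γ ∈ Γ, c γ * (𝐞 (γ * x) : ℂ)) ^ n = ∑ α ∈ Γ.piAntidiag n,
      (Nat.multinomial Γ α * ∏ γ ∈ Γ, c γ ^ α γ) * 𝐞 ((∑ γ ∈ Γ, α γ * γ) * x) := by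
    intro x
    rw [Finset.sum_pow_eq_sum_piAntidiag]
    refine Finset.sum_congr rfl fun α _ => ?_
    have hchar : (𝐞 ((∑ γ ∈ Γ, α γ * γ) * x) : ℂ) = ∏ γ ∈ Γ, (𝐞 (γ * x) : ℂ) ^ α γ := by
      simp_rw [Real.fourierChar_apply, ← Complex.exp_nat_mul, ← Complex.exp_sum, Finset.sum_mul,
        Finset.mul_sum]
      push_cast
      rw [Finset.sum_mul]
      exact congrArg _ (Finset.sum_congr rfl fun γ _ => by ring)
    rw [hchar, mul_assoc, ← Finset.prod_mul_distrib]
    simp only [mul_pow]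
  have hpow : ∀ x, ‖(∑ γ ∈ Γ, c γ * (𝐞 (γ * x) : ℂ)) ^ n‖ ≤ M ^ n := fun x => by
    rw [norm_pow]
    exact pow_le_pow_left₀ (norm_nonneg _) (hM x) n
  simp only [hexp] at hpow ⊢
  refine (trigPoly_of_norm_le _ _ _ hpow).mono ?_
  gcongr
  exact_mod_cast card_piAntidiag_le Γ n

theorem exists_trigPoly_sub (hF : WienerNormLE F N) {ε : ℝ} (hε : 0 < ε) :
    ∃ (Γ : Finset ℝ) (c : ℝ → ℂ),
      WienerNormLE (fun x => F x - ∑ γ ∈ Γ, c γ * 𝐞 (γ * x)) ε := by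
  obtain ⟨c, hc, -, hcF⟩ := hF
  obtain ⟨Γ, hΓ⟩ := ((tendsto_order.1
    (tendsto_tsum_compl_atTop_zero fun γ => ‖c γ‖)).2 ε hε).exists
  refine ⟨Γ, c, (of_hasSum (ι := {γ // γ ∉ Γ}) (c := fun γ => c γ) (w := (↑)) (hc.subtype _)
    fun x => ?_).mono hΓ.le⟩
  exact (Finset.hasSum_compl_iff Γ (f := fun γ => c γ * (𝐞 (γ * x) : ℂ))).2 (by simpa using hcF x)

theorem exists_pow_le_geometric (hF : WienerNormLE F N) {ρ : ℝ} (hρ : ρ < 1)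
    (hFρ : ∀ x, ‖F x‖ ≤ ρ) :
    ∃ C r : ℝ, 0 ≤ r ∧ r < 1 ∧ ∀ n : ℕ, WienerNormLE (fun x => F x ^ n) (C * r ^ n) := by
  have hρ0 : 0 ≤ ρ := (norm_nonneg _).trans (hFρ 0)
  obtain ⟨ε, hε, hερ⟩ : ∃ ε : ℝ, 0 < ε ∧ ρ + 3 * ε < 1 := ⟨(1 - ρ) / 4, by linarith, by linarith⟩
  obtain ⟨Γ, c, htail⟩ := hF.exists_trigPoly_sub hε
  set P : ℝ → ℂ := fun x => ∑ γ ∈ Γ, c γ * 𝐞 (γ * x)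
  have hP : ∀ x, ‖P x‖ ≤ ρ + ε := fun x => by
    have : ‖P x - F x‖ ≤ ε := by
      rw [norm_sub_rev]
      exact htail.norm_le x
    linarith [norm_le_norm_add_norm_sub (F x) (P x), hFρ x, norm_sub_rev (F x) (P x)]
  obtain ⟨C, hC⟩ := exists_add_one_pow_mul_pow_le Γ.card (a := ρ + ε) (r := ρ + 2 * ε)
    (by positivity) (by linarith)
  refine ⟨C, ρ + 2 * ε + ε, by positivity, by linarith, fun n => ?_⟩
  have hbinom : (fun x => F x ^ n) = fun x => ∑ m ∈ Finset.range (n + 1),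
      P x ^ m * (F x - P x) ^ (n - m) * (n.choose m : ℂ) := by
    funext x
    rw [← add_pow, add_sub_cancel]
  rw [hbinom]
  refine (finsetSum _ fun m _ => (((trigPoly_pow Γ c hP m).mono (hC m)).mul
    (htail.pow (n - m))).mul (const _)).mono (le_of_eq ?_)
  rw [add_pow, Finset.mul_sum]
  refine Finset.sum_congr rfl fun m _ => ?_
  rw [Complex.norm_natCast]
  ring

/-- Wiener's lemma. With `H := 1 - ‖F‖² / N²` one has `1 / F = conj F / N² · ∑ Hⁿ`. -/
theorem exists_inv (hF : WienerNormLE F N) {c : ℝ} (hc : 0 < c) (hcF : ∀ x, c ≤ ‖F x‖) :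
    ∃ N', WienerNormLE (fun x => (F x)⁻¹) N' := by
  have hN : 0 < N := hc.trans_le ((hcF 0).trans (hF.norm_le 0))
  have hF0 : ∀ x, F x ≠ 0 := fun x => norm_pos_iff.1 (hc.trans_le (hcF x))
  set H : ℝ → ℂ := fun x => 1 + (-((N : ℂ) ^ 2)⁻¹) * (F x * starRingEnd ℂ (F x)) with hH
  have hHW : WienerNormLE H _ := (const 1).add ((const _).mul (hF.mul hF.conj))
  have hHval : ∀ x, H x = ((1 - ‖F x‖ ^ 2 / N ^ 2 : ℝ) : ℂ) := fun x => by
    simp only [hH, Complex.mul_conj, Complex.normSq_eq_norm_sq]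
    push_cast
    ring
  have hHle : ∀ x, ‖H x‖ ≤ 1 - c ^ 2 / N ^ 2 := fun x => by
    have hlow : c ^ 2 / N ^ 2 ≤ ‖F x‖ ^ 2 / N ^ 2 := by gcongr; exact hcF x
    have hup : ‖F x‖ ^ 2 / N ^ 2 ≤ 1 :=
      (div_le_one (by positivity)).2 (pow_le_pow_left₀ (norm_nonneg _) (hF.norm_le x) 2)
    rw [hHval, Complex.norm_real, Real.norm_of_nonneg (by linarith)]
    linarith
  have hlt : 1 - c ^ 2 / N ^ 2 < 1 := sub_lt_self _ (by positivity)
  obtain ⟨C, r, hr0, hr1, hpow⟩ := hHW.exists_pow_le_geometric hlt hHle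
  have hneumann := hasSum hpow ((summable_geometric_of_lt_one hr0 hr1).mul_left C)
    fun x => hasSum_geometric_of_norm_lt_one ((hHle x).trans_lt hlt)
  have hinv : (fun x => (F x)⁻¹) =
      fun x => ((N : ℂ) ^ 2)⁻¹ * starRingEnd ℂ (F x) * (1 - H x)⁻¹ := by
    funext x
    have hconj : starRingEnd ℂ (F x) ≠ 0 := (map_ne_zero _).2 (hF0 x)
    have hN' : (N : ℂ) ≠ 0 := by exact_mod_cast hN.ne'
    simp only [hH]
    field_simp [hF0 x]
    ring
  rw [hinv]
  exact ⟨_, ((const _).mul hF.conj).mul hneumann⟩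

end WienerNormLE

theorem norm_cexp_two_pi_I_mul_le {w B K : ℝ} (hw : |w| ≤ B) {z : ℂ} (hz : |z.im| ≤ K) :
    ‖Complex.exp (2 * Real.pi * I * z * w)‖ ≤ Real.exp (2 * Real.pi * B * K) := by
  have hre : (2 * Real.pi * I * z * w : ℂ).re = 2 * Real.pi * -(w * z.im) := by
    simp
    ring
  rw [Complex.norm_exp, hre, mul_assoc _ B K]
  gcongr
  calc -(w * z.im) ≤ |w| * |z.im| := (neg_le_abs _).trans_eq (abs_mul w z.im)
    _ ≤ B * K := mul_le_mul hw hz (abs_nonneg _) ((abs_nonneg w).trans hw)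

section dserC

variable {q a b : ℕ → ℂ} {ω : ℕ → ℝ} {B : ℝ}

theorem norm_dserC_term_le (hB : ∀ i, |ω i| ≤ B) {K : ℝ} {z : ℂ} (hz : |z.im| ≤ K) (i : ℕ) :
    ‖q i * Complex.exp (2 * Real.pi * I * z * ω i)‖ ≤ ‖q i‖ * Real.exp (2 * Real.pi * B * K) := by
  rw [norm_mul]
  gcongr
  exact norm_cexp_two_pi_I_mul_le (hB i) hz

theorem summable_norm_dserC_term (hq : Summable fun i => ‖q i‖) (hB : ∀ i, |ω i| ≤ B) (z : ℂ) :
    Summable fun i => ‖q i * Complex.exp (2 * Real.pi * I * z * ω i)‖ :=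
  .of_nonneg_of_le (fun _ => norm_nonneg _) (norm_dserC_term_le hB le_rfl) (hq.mul_right _)

theorem norm_dserC_le (hq : Summable fun i => ‖q i‖) (hB : ∀ i, |ω i| ≤ B) {K : ℝ} {z : ℂ}
    (hz : |z.im| ≤ K) : ‖dserC q ω z‖ ≤ (∑' i, ‖q i‖) * Real.exp (2 * Real.pi * B * K) := by
  refine (norm_tsum_le_tsum_norm (summable_norm_dserC_term hq hB z)).trans ?_
  rw [← tsum_mul_right]
  exact (summable_norm_dserC_term hq hB z).tsum_le_tsum (norm_dserC_term_le hB hz)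
    (hq.mul_right _)

theorem dserC_sub (ha : Summable fun i => ‖a i‖) (hb : Summable fun i => ‖b i‖)
    (hB : ∀ i, |ω i| ≤ B) (z : ℂ) : dserC (a - b) ω z = dserC a ω z - dserC b ω z := by
  simp only [dserC, Pi.sub_apply, sub_mul]
  exact (summable_norm_dserC_term ha hB z).of_norm.tsum_sub
    (summable_norm_dserC_term hb hB z).of_norm

theorem dserC_add_ofReal (q : ℕ → ℂ) (ω : ℕ → ℝ) (z : ℂ) (x : ℝ) :
    dserC q ω (z + x) = dserC (fun i => q i * 𝐞 (ω i * x)) ω z := by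
  refine tsum_congr fun i => ?_
  beta_reduce
  rw [Real.fourierChar_apply, mul_assoc (q i), ← Complex.exp_add]
  push_cast
  ring_nf

theorem hasDerivAt_dserC (hq : Summable fun i => ‖q i‖) (hB : ∀ i, |ω i| ≤ B) (z : ℂ) :
    HasDerivAt (dserC q ω) (dserC (fun i => q i * (2 * Real.pi * I * ω i)) ω z) z := by
  set U : Set ℂ := {w | |w.im| < |z.im| + 1}
  have hU : IsOpen U := isOpen_lt (by fun_prop) continuous_const
  have hzU : z ∈ U := lt_add_one |z.im|
  have hbound := hq.mul_right (Real.exp (2 * Real.pi * B * (|z.im| + 1)))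
  have hterm : ∀ i, Differentiable ℂ fun w => q i * Complex.exp (2 * Real.pi * I * w * ω i) :=
    fun i => by fun_prop
  have hle : ∀ i, ∀ w ∈ U, ‖q i * Complex.exp (2 * Real.pi * I * w * ω i)‖ ≤
      ‖q i‖ * Real.exp (2 * Real.pi * B * (|z.im| + 1)) :=
    fun i w hw => norm_dserC_term_le hB (le_of_lt hw) i
  have hdiff : DifferentiableAt ℂ (dserC q ω) z :=
    (differentiableOn_tsum_of_summable_norm hbound (fun i => (hterm i).differentiableOn) hU
      hle).differentiableAt (hU.mem_nhds hzU)
  have hsum := hasSum_deriv_of_summable_norm hbound (fun i => (hterm i).differentiableOn) hU hle hzU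
  refine hdiff.hasDerivAt.congr_deriv (hsum.tsum_eq.symm.trans (tsum_congr fun i => ?_))
  rw [((((hasDerivAt_id' z).const_mul (2 * Real.pi * I : ℂ)).mul_const
    (ω i : ℂ)).cexp.const_mul (q i)).deriv]
  ring

theorem differentiable_dserC (hq : Summable fun i => ‖q i‖) (hB : ∀ i, |ω i| ≤ B) :
    Differentiable ℂ (dserC q ω) := fun z => (hasDerivAt_dserC hq hB z).differentiableAt

theorem summable_norm_mul_two_pi_I_mul (hq : Summable fun i => ‖q i‖) (hB : ∀ i, |ω i| ≤ B) :
    Summable fun i => ‖q i * (2 * Real.pi * I * ω i)‖ := by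
  refine .of_nonneg_of_le (fun _ => norm_nonneg _) (fun i => ?_) (hq.mul_right (2 * Real.pi * B))
  have hnorm : ‖(2 * Real.pi * I * ω i : ℂ)‖ = 2 * Real.pi * |ω i| := by
    simp [abs_of_pos Real.pi_pos]
  rw [norm_mul, hnorm]
  gcongr
  exact hB i

theorem exists_wienerNormLE_dserC_line (hq : Summable fun i => ‖q i‖) (hB : ∀ i, |ω i| ≤ B)
    (t : ℝ) : ∃ N, WienerNormLE (fun x => dserC q ω (x + t * I)) N := by
  refine ⟨_, .of_hasSum (summable_norm_dserC_term hq hB (t * I)) (w := ω) fun x => ?_⟩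
  have hterm : ∀ i, q i * Complex.exp (2 * Real.pi * I * (t * I) * ω i) * 𝐞 (ω i * x) =
      q i * Complex.exp (2 * Real.pi * I * (x + t * I) * ω i) := fun i => by
    rw [Real.fourierChar_apply, mul_assoc (q i), ← Complex.exp_add]
    push_cast
    ring_nf
  simp only [hterm]
  exact (summable_norm_dserC_term hq hB (x + t * I)).of_norm.hasSum

theorem exists_wienerNormLE_logDeriv_dserC_line (hq : Summable fun i => ‖q i‖)
    (hB : ∀ i, |ω i| ≤ B) {t c : ℝ} (hc : 0 < c) (hlow : ∀ x : ℝ, c ≤ ‖dserC q ω (x + t * I)‖) :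
    ∃ N, WienerNormLE (fun x => logDeriv (dserC q ω) (x + t * I)) N := by
  obtain ⟨N, hQ⟩ := exists_wienerNormLE_dserC_line hq hB t
  obtain ⟨N', hQinv⟩ := hQ.exists_inv hc hlow
  obtain ⟨M, hQ'⟩ := exists_wienerNormLE_dserC_line (summable_norm_mul_two_pi_I_mul hq hB) hB t
  refine ⟨M * N', ?_⟩
  simpa only [logDeriv_apply, (hasDerivAt_dserC hq hB _).deriv, div_eq_mul_inv] using hQ'.mul hQinv

end dserC

theorem hurwitz_eventually_exists_zero {ι : Type*} {l : Filter ι} {F : ι → ℂ → ℂ} {f : ℂ → ℂ}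
    {a : ℂ} {r : ℝ} (hr : 0 < r) (hF : ∀ n, DifferentiableOn ℂ (F n) (closedBall a r))
    (hlim : TendstoUniformlyOn F f l (closedBall a r)) (hf : ContinuousOn f (sphere a r))
    (ha : f a = 0) (hsphere : ∀ w ∈ sphere a r, f w ≠ 0) :
    ∀ᶠ n in l, ∃ w ∈ closedBall a r, F n w = 0 := by
  obtain ⟨w₀, hw₀, hmin⟩ := (isCompact_sphere a r).exists_isMinOn
    (NormedSpace.sphere_nonempty.2 hr.le) hf.norm
  have hm : 0 < ‖f w₀‖ := norm_pos_iff.2 (hsphere w₀ hw₀)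
  filter_upwards [Metric.tendstoUniformlyOn_iff.1 hlim (‖f w₀‖ / 2) (by positivity)] with n hn
  by_contra! hne
  have hcentre : ‖F n a‖ < ‖f w₀‖ / 2 := by
    simpa [ha] using hn a (mem_closedBall_self hr.le)
  have hboundary : ∀ w ∈ sphere a r, ‖f w₀‖ / 2 ≤ ‖F n w‖ := fun w hw => by
    have h₁ : ‖f w₀‖ ≤ ‖f w‖ := hmin hw
    have h₂ := hn w (sphere_subset_closedBall hw)
    rw [dist_eq_norm] at h₂
    linarith [norm_sub_norm_le (f w) (F n w)]
  have hmax : ‖(F n a)⁻¹‖ ≤ (‖f w₀‖ / 2)⁻¹ := by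
    refine Complex.norm_le_of_forall_mem_frontier_norm_le (f := fun w => (F n w)⁻¹) isBounded_ball
      ?_ ?_ (subset_closure (mem_ball_self hr))
    · refine DifferentiableOn.diffContOnCl ?_
      rw [closure_ball a hr.ne']
      exact (hF n).inv hne
    · rw [frontier_ball a hr.ne']
      intro w hw
      rw [norm_inv]
      exact inv_anti₀ (by positivity) (hboundary w hw)
  rw [norm_inv, inv_le_inv₀ (norm_pos_iff.2 (hne a (mem_closedBall_self hr.le))) (by positivity)]
    at hmax
  exact hcentre.not_ge hmax

theorem eventually_nhdsNE_ne_zero {f : ℂ → ℂ} (hf : Differentiable ℂ f)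
    (hne : ∃ z, f z ≠ 0) (a : ℂ) : ∀ᶠ w in 𝓝[≠] a, f w ≠ 0 := by
  refine (hf.analyticAt a).eventually_eq_zero_or_eventually_ne_zero.resolve_left fun hzero => ?_
  obtain ⟨z, hz⟩ := hne
  have hAn : AnalyticOnNhd ℂ f Set.univ := fun z _ => hf.analyticAt z
  exact hz (hAn.eqOn_zero_of_preconnected_of_eventuallyEq_zero isPreconnected_univ
    (Set.mem_univ a) hzero (Set.mem_univ z))

section MinimumModulus

variable {q : ℕ → ℂ} {ω : ℕ → ℝ} {B : ℝ}

theorem exists_subseq_dserC_translates_tendstoUniformlyOn (hq : Summable fun i => ‖q i‖)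
    (hB : ∀ i, |ω i| ≤ B) (x : ℕ → ℝ) :
    ∃ φ : ℕ → ℕ, StrictMono φ ∧ ∃ a : ℕ → ℂ, (Summable fun i => ‖a i‖) ∧ ∀ K : ℝ,
      TendstoUniformlyOn (fun n w => dserC q ω (w + x (φ n))) (dserC a ω) atTop
        {w | |w.im| ≤ K} := by
  obtain ⟨χ, hχ, φ, hφ, hlim⟩ :=
    (isCompact_univ_pi fun _ : ℕ => isCompact_closedBall (0 : ℂ) 1).tendsto_subseq
      (x := fun n i => (𝐞 (ω i * x n) : ℂ)) fun n i _ => by simp [Circle.norm_coe]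
  rw [tendsto_pi_nhds] at hlim
  have hχ1 : ∀ i, ‖χ i‖ ≤ 1 := fun i => by simpa using hχ i (Set.mem_univ i)
  have hqχ : Summable fun i => ‖q i * χ i‖ := hq.of_nonneg_of_le (fun _ => norm_nonneg _)
    fun i => by
      rw [norm_mul]
      exact mul_le_of_le_one_right (norm_nonneg _) (hχ1 i)
  have hqe : ∀ n, Summable fun i => ‖q i * (𝐞 (ω i * x (φ n)) : ℂ)‖ := fun n =>
    summable_norm_mul_fourierChar hq ω _
  have hcoeff : Tendsto (fun n => ∑' i, ‖q i * (𝐞 (ω i * x (φ n)) : ℂ) - q i * χ i‖) atTop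
      (𝓝 0) := by
    rw [← tsum_zero (α := ℝ) (β := ℕ)]
    refine tendsto_tsum_of_dominated_convergence (hq.mul_right 2) (fun i => ?_)
      (Eventually.of_forall fun n i => ?_)
    · simpa using (((hlim i).const_mul (q i)).sub_const (q i * χ i)).norm
    · rw [norm_norm, ← mul_sub, norm_mul]
      gcongr
      refine (norm_sub_le _ _).trans ?_
      rw [Circle.norm_coe]
      linarith [hχ1 i]
  refine ⟨φ, hφ, fun i => q i * χ i, hqχ, fun K => ?_⟩
  have hstrip := hcoeff.mul_const (Real.exp (2 * Real.pi * B * K))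
  rw [zero_mul] at hstrip
  rw [Metric.tendstoUniformlyOn_iff]
  intro ε hε
  filter_upwards [hstrip.eventually_lt_const hε] with n hn w hw
  rw [dist_comm, dist_eq_norm, dserC_add_ofReal, ← dserC_sub (hqe n) hqχ hB]
  exact (norm_dserC_le (.of_nonneg_of_le (fun _ => norm_nonneg _) (fun i => norm_sub_le _ _)
    ((hqe n).add hqχ)) hB hw).trans_lt hn

theorem dserC_eq_zero_of_translates_tendstoUniformlyOn_zero (hq : Summable fun i => ‖q i‖)
    (hB : ∀ i, |ω i| ≤ B) {x : ℕ → ℝ}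
    (hlim : TendstoUniformlyOn (fun n w => dserC q ω (w + x n)) 0 atTop {w | |w.im| ≤ 0}) (z : ℂ) :
    dserC q ω z = 0 := by
  have hline : ∀ t : ℝ, dserC q ω t = 0 := fun t => by
    refine norm_le_zero_iff.1 (le_of_forall_pos_lt_add fun ε hε => ?_)
    obtain ⟨n, hn⟩ := (Metric.tendstoUniformlyOn_iff.1 hlim ε hε).exists
    simpa using hn ((t - x n : ℝ) : ℂ) (by simp)
  by_contra hz
  have hev := eventually_nhdsNE_ne_zero (differentiable_dserC hq hB) ⟨z, hz⟩ 0
  have hreal : Tendsto (fun t : ℝ => (t : ℂ)) (𝓝[≠] 0) (𝓝[≠] 0) :=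
    tendsto_nhdsWithin_iff.2
      ⟨by simpa using (Complex.continuous_ofReal.tendsto 0).mono_left nhdsWithin_le_nhds,
        by filter_upwards [self_mem_nhdsWithin] with t ht using by simpa using ht⟩
  obtain ⟨t, ht⟩ := (hreal.eventually hev).exists
  exact ht (hline t)

theorem exists_zero_near_of_translates_tendstoUniformlyOn {Q f : ℂ → ℂ} (hQ : Differentiable ℂ Q)
    (hf : Differentiable ℂ f) (hfne : ∃ w, f w ≠ 0) {z : ℕ → ℂ} {y : ℝ}
    (hy : Tendsto (fun n => (z n).im) atTop (𝓝 y))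
    (hlim : ∀ K : ℝ, TendstoUniformlyOn (fun n w => Q (w + (z n).re)) f atTop {w | |w.im| ≤ K})
    (hQz : Tendsto (fun n => Q (z n)) atTop (𝓝 0)) {δ : ℝ} (hδ : 0 < δ) :
    ∃ n, ∃ w ∈ ball (z n) δ, Q w = 0 := by
  have hshift : ∀ n, ((z n).im * I + (z n).re : ℂ) = z n := fun n => by rw [add_comm, re_add_im]
  have hpts : Tendsto (fun n => ((z n).im * I : ℂ)) atTop (𝓝 (y * I)) :=
    ((Complex.continuous_ofReal.tendsto y).comp hy).mul_const I
  have hzero : f (y * I) = 0 := by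
    refine tendsto_nhds_unique ?_ hQz
    have hpts' : Tendsto (fun n => ((z n).im * I : ℂ)) atTop
        (𝓝[{w | |w.im| ≤ |y| + 1}] (y * I)) := by
      refine tendsto_nhdsWithin_iff.2 ⟨hpts, ?_⟩
      filter_upwards [hy.abs.eventually_lt_const (lt_add_one |y|)] with n hn
      simpa using hn.le
    simpa only [hshift] using (hlim (|y| + 1)).tendsto_comp
      hf.continuous.continuousWithinAt hpts'
  obtain ⟨ρ, hρ, hisol⟩ := Metric.eventually_nhds_iff.1
    (eventually_nhdsWithin_iff.1 (eventually_nhdsNE_ne_zero hf hfne (y * I)))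
  set r := min (ρ / 2) (δ / 2)
  have hr0 : 0 < r := by positivity
  have hsphere : ∀ w ∈ sphere (y * I : ℂ) r, f w ≠ 0 := fun w hw =>
    hisol (by rw [mem_sphere.1 hw]; linarith [min_le_left (ρ / 2) (δ / 2)])
      (ne_of_mem_sphere hw hr0.ne')
  have hstrip : closedBall (y * I : ℂ) r ⊆ {w | |w.im| ≤ |y| + r} := fun w hw => by
    have him : |w.im - y| ≤ r := by
      simpa using (Complex.abs_im_le_norm (w - y * I)).trans (mem_closedBall_iff_norm.1 hw)
    rw [Set.mem_ofPred_eq]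
    linarith [abs_sub_abs_le_abs_sub w.im y]
  have hhurwitz := hurwitz_eventually_exists_zero hr0
    (fun n => (hQ.comp (differentiable_id.add_const ((z n).re : ℂ))).differentiableOn)
    ((hlim (|y| + r)).mono hstrip) hf.continuous.continuousOn hzero hsphere
  obtain ⟨n, ⟨w, hw, hQw⟩, hn⟩ :=
    (hhurwitz.and (Metric.tendsto_nhds.1 hpts (δ / 2) (by positivity))).exists
  refine ⟨n, w + (z n).re, ?_, hQw⟩
  rw [dist_comm] at hn
  calc dist (w + (z n).re) (z n) = dist w ((z n).im * I) := by
        conv_lhs => enter [2]; rw [← hshift n]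
        rw [dist_add_right]
    _ < δ := by linarith [dist_triangle w (y * I) ((z n).im * I), mem_closedBall.1 hw,
        min_le_right (ρ / 2) (δ / 2)]

/-- Almost periodicity replaces compactness: a sequence of counterexamples, translated back to the
imaginary axis, subconverges to a nonzero Dirichlet series with a zero, and Hurwitz's theorem moves
that zero back to the original series. -/
theorem exists_pos_le_norm_dserC (hq : Summable fun i => ‖q i‖) (hB : ∀ i, |ω i| ≤ B)
    (hne : ∃ z, dserC q ω z ≠ 0) (K : ℝ) {δ : ℝ} (hδ : 0 < δ) :
    ∃ c : ℝ, 0 < c ∧ ∀ z : ℂ, |z.im| ≤ K → (∀ w ∈ ball z δ, dserC q ω w ≠ 0) →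
      c ≤ ‖dserC q ω z‖ := by
  by_contra! H
  choose z hzK hz0 hzsmall using fun n : ℕ => H (1 / ((n : ℝ) + 1)) (by positivity)
  obtain ⟨y, -, ψ, hψ, hy⟩ := (isCompact_Icc (a := -K) (b := K)).tendsto_subseq
    fun n => abs_le.1 (hzK n)
  obtain ⟨φ, hφ, a, ha, hlim⟩ :=
    exists_subseq_dserC_translates_tendstoUniformlyOn hq hB fun n => (z (ψ n)).re
  have hane : ∃ w, dserC a ω w ≠ 0 := by
    by_contra! h0
    obtain ⟨w, hw⟩ := hne
    refine hw (dserC_eq_zero_of_translates_tendstoUniformlyOn_zero hq hB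
      (x := fun n => (z (ψ (φ n))).re) ?_ w)
    rw [← show dserC a ω = 0 from funext h0]
    exact hlim 0
  have hsmall : Tendsto (fun n => dserC q ω (z (ψ (φ n)))) atTop (𝓝 0) :=
    squeeze_zero_norm (fun n => (hzsmall _).le)
      (tendsto_one_div_add_atTop_nhds_zero_nat.comp (hψ.comp hφ).tendsto_atTop)
  obtain ⟨n, w, hw, hQw⟩ := exists_zero_near_of_translates_tendstoUniformlyOn
    (differentiable_dserC hq hB) (differentiable_dserC ha hB) hane
    (hy.comp hφ.tendsto_atTop) hlim hsmall hδ
  exact hz0 _ w hw hQw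

end MinimumModulus

section Multiplicity

variable {f : ℂ → ℂ}

theorem analyticOrderAt_ne_top_of_differentiable (hf : Differentiable ℂ f) (hne : ∃ z, f z ≠ 0)
    (a : ℂ) : analyticOrderAt f a ≠ ⊤ := by
  obtain ⟨z, hz⟩ := hne
  rw [Ne, AnalyticOnNhd.analyticOrderAt_eq_top_iff_eq_zero a hf.analyticAt]
  rintro rfl
  exact hz rfl

theorem analyticOrderNatAt_ne_zero_iff (hf : Differentiable ℂ f) (hne : ∃ z, f z ≠ 0) {a : ℂ} :
    analyticOrderNatAt f a ≠ 0 ↔ f a = 0 := by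
  rw [← (hf.analyticAt a).analyticOrderAt_ne_zero,
    ← Nat.cast_analyticOrderNatAt (analyticOrderAt_ne_top_of_differentiable hf hne a),
    Nat.cast_ne_zero]

theorem IsZeroCounting.mass_eq_analyticOrderNatAt {μ : PPM ℝ} (hμ : IsZeroCounting f μ)
    (hf : Differentiable ℂ f) (hne : ∃ z, f z ≠ 0) (x : ℝ) :
    μ.mass x = analyticOrderNatAt f x := by
  obtain ⟨k, g, hk, hg, hgx, hfg⟩ := hμ x
  rw [hk, ((hf.analyticAt x).analyticOrderNatAt_eq_iff
    (analyticOrderAt_ne_top_of_differentiable hf hne x)).2 ⟨g, hg x, hgx, .of_forall hfg⟩]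

theorem differentiable_iterate_dslope (hf : Differentiable ℂ f) (a : ℂ) (n : ℕ) :
    Differentiable ℂ ((Function.swap dslope a)^[n] f) := by
  induction n with
  | zero => exact hf
  | succ n ih =>
    rw [Function.iterate_succ_apply']
    exact differentiableOn_univ.1 ((differentiableOn_dslope univ_mem).2 ih.differentiableOn)

theorem exists_eq_pow_analyticOrderNatAt_mul (hf : Differentiable ℂ f) (hne : ∃ z, f z ≠ 0)
    (a : ℂ) : ∃ g : ℂ → ℂ, Differentiable ℂ g ∧ g a ≠ 0 ∧
      f = fun z => (z - a) ^ analyticOrderNatAt f a * g z := by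
  have htop := analyticOrderAt_ne_top_of_differentiable hf hne a
  obtain ⟨p, hp⟩ := hf.analyticAt a
  have hp0 : p ≠ 0 := fun h => htop (analyticOrderAt_eq_top.2 (hp.locally_zero_iff.2 h))
  have hfactor := hp.eq_pow_order_mul_iterate_dslope
  have hga := hp.iterate_dslope_fslope_ne_zero hp0
  have hg := differentiable_iterate_dslope hf a p.order
  have horder : analyticOrderNatAt f a = p.order :=
    ((hf.analyticAt a).analyticOrderNatAt_eq_iff htop).2
      ⟨_, hg.analyticAt a, hga, .of_forall hfactor⟩
  exact ⟨_, hg, hga, by rw [horder]; exact funext hfactor⟩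

theorem exists_eq_prod_pow_analyticOrderNatAt_mul (hf : Differentiable ℂ f) (hne : ∃ z, f z ≠ 0)
    (S : Finset ℂ) : ∃ g : ℂ → ℂ, Differentiable ℂ g ∧ (∀ a ∈ S, g a ≠ 0) ∧
      f = fun z => (∏ a ∈ S, (z - a) ^ analyticOrderNatAt f a) * g z := by
  induction S using Finset.induction_on with
  | empty => exact ⟨f, hf, by simp, by simp⟩
  | insert b S hb ih =>
    obtain ⟨g, hg, hgS, hfg⟩ := ih
    set p : ℂ → ℂ := fun z => ∏ a ∈ S, (z - a) ^ analyticOrderNatAt f a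
    have hp : AnalyticAt ℂ p b := by fun_prop
    have hpb : p b ≠ 0 := Finset.prod_ne_zero_iff.2 fun a ha =>
      pow_ne_zero _ (sub_ne_zero.2 fun h => hb (h ▸ ha))
    have hgne : ∃ z, g z ≠ 0 := by
      obtain ⟨z, hz⟩ := hne
      exact ⟨z, right_ne_zero_of_mul (a := p z) (by rwa [hfg] at hz)⟩
    have horder : analyticOrderNatAt g b = analyticOrderNatAt f b := by
      conv_rhs => rw [hfg, ← Pi.mul_def]
      rw [analyticOrderNatAt, analyticOrderNatAt, analyticOrderAt_mul hp (hg.analyticAt b),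
        hp.analyticOrderAt_eq_zero.2 hpb, zero_add]
    obtain ⟨h, hh, hhb, hgh⟩ := exists_eq_pow_analyticOrderNatAt_mul hg hgne b
    refine ⟨h, hh, Finset.forall_mem_insert .. |>.2 ⟨hhb, fun a ha h0 => hgS a ha ?_⟩, ?_⟩
    · rw [congrFun hgh a, h0, mul_zero]
    · funext z
      rw [Finset.prod_insert hb, ← horder, mul_right_comm, mul_comm, ← congrFun hgh z]
      exact congrFun hfg z

theorem sum_analyticOrderNatAt_le (hf : Differentiable ℂ f) {c : ℂ} {r R M : ℝ} (hr : 0 < r)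
    (hrR : r < R) (hM : 1 ≤ M) (hfc : f c ≠ 0) (hbound : ∀ z ∈ sphere c R, ‖f z‖ ≤ M)
    {S : Finset ℂ} (hS : ∀ a ∈ S, a ∈ closedBall c r) :
    ∑ a ∈ S, (analyticOrderNatAt f a : ℝ) ≤ Real.log (M / ‖f c‖) / Real.log (R / r) := by
  have han (U : Set ℂ) : AnalyticOnNhd ℂ f U := fun z _ => hf.analyticAt z
  set D := MeromorphicOn.divisor f (closedBall c |r|)
  have hDS : ∀ a ∈ S, (analyticOrderNatAt f a : ℤ) = D a := fun a ha => by
    rw [MeromorphicOn.AnalyticOnNhd.divisor_apply (han _) (by rw [abs_of_pos hr]; exact hS a ha),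
      ← Nat.cast_analyticOrderNatAt (analyticOrderAt_ne_top_of_differentiable hf ⟨c, hfc⟩ a)]
    rfl
  have hsum : ∑ a ∈ S, (analyticOrderNatAt f a : ℤ) ≤ ∑ᶠ a, D a := by
    have hfin := D.finiteSupport (isCompact_closedBall c |r|)
    rw [finsum_eq_sum_of_support_subset_of_finite _ subset_rfl hfin, Finset.sum_congr rfl hDS,
      ← Finset.sum_filter_ne_zero]
    refine Finset.sum_le_sum_of_subset_of_nonneg (fun a ha => ?_) fun a _ _ =>
      MeromorphicOn.AnalyticOnNhd.divisor_nonneg (han _) a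
    exact hfin.mem_toFinset.2 (Finset.mem_filter.1 ha).2
  have hR := hr.trans hrR
  calc ∑ a ∈ S, (analyticOrderNatAt f a : ℝ) ≤ ((∑ᶠ a, D a : ℤ) : ℝ) := mod_cast hsum
    _ ≤ _ := AnalyticOnNhd.sum_divisor_le (abs_pos.2 hr.ne')
      (by rwa [abs_of_pos hr, abs_of_pos hR]) hM (han _) hfc (by rwa [abs_of_pos hR])

end Multiplicity

section TranslationBounded

/-- The measure `∑ m a • δ_a` on `ℝ` is *translation bounded*: intervals of length two have
uniformly bounded mass. The mass is tested on finite sets, which makes local finiteness of the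
support part of the definition. -/
def IsTranslationBounded (m : ℝ → ℕ) : Prop :=
  ∃ N : ℝ, ∀ (x : ℝ) (S : Finset ℝ), (∀ a ∈ S, |a - x| ≤ 1) → ∑ a ∈ S, (m a : ℝ) ≤ N

variable {m : ℝ → ℕ}

theorem summable_int_one_div_one_add_sq : Summable fun n : ℤ => 1 / (1 + (n : ℝ) ^ 2) := by
  refine .of_norm_bounded_eventually (Real.summable_one_div_int_pow.2 one_lt_two) ?_
  filter_upwards [(Set.finite_singleton (0 : ℤ)).eventually_cofinite_notMem] with n hn
  have hn' : (n : ℝ) ≠ 0 := by simpa using hn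
  rw [Real.norm_of_nonneg (by positivity)]
  gcongr
  linarith

namespace IsTranslationBounded

theorem summable_div_one_add_sq (hm : IsTranslationBounded m) :
    Summable fun a : ℝ => (m a : ℝ) / (1 + a ^ 2) := by
  obtain ⟨N, hN⟩ := hm
  have hN0 : 0 ≤ N := by simpa using hN 0 ∅ (by simp)
  have hs : Summable fun n : ℤ => N * (3 * (1 / (1 + (n : ℝ) ^ 2))) :=
    (summable_int_one_div_one_add_sq.mul_left _).mul_left _
  refine summable_of_sum_le (fun a => by positivity)
    (c := ∑' n : ℤ, N * (3 * (1 / (1 + (n : ℝ) ^ 2)))) fun S => ?_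
  rw [← Finset.sum_fiberwise_of_maps_to fun a ha => Finset.mem_image_of_mem Int.floor ha]
  refine (Finset.sum_le_sum fun n _ => ?_).trans (hs.sum_le_tsum _ fun n _ => by positivity)
  have hfloor : ∀ a ∈ S.filter (⌊·⌋ = n), (n : ℝ) ≤ a ∧ a < n + 1 := fun a ha =>
    Int.floor_eq_iff.1 (Finset.mem_filter.1 ha).2
  calc ∑ a ∈ S with ⌊a⌋ = n, (m a : ℝ) / (1 + a ^ 2)
      ≤ ∑ a ∈ S with ⌊a⌋ = n, (m a : ℝ) * (3 * (1 / (1 + (n : ℝ) ^ 2))) := by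
        refine Finset.sum_le_sum fun a ha => ?_
        obtain ⟨h1, h2⟩ := hfloor a ha
        rw [div_eq_mul_one_div]
        gcongr
        rw [mul_one_div, div_le_div_iff₀ (by positivity) (by positivity)]
        nlinarith [sq_nonneg (a + (a - n)), sq_nonneg (a - 2 * (a - n))]
    _ = (∑ a ∈ S with ⌊a⌋ = n, (m a : ℝ)) * (3 * (1 / (1 + (n : ℝ) ^ 2))) := by
        rw [Finset.sum_mul]
    _ ≤ N * (3 * (1 / (1 + (n : ℝ) ^ 2))) := by
        gcongr
        refine hN n _ fun a ha => ?_
        obtain ⟨h1, h2⟩ := hfloor a ha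
        rw [abs_le]
        constructor <;> linarith

theorem finite_setOf_abs_le (hm : IsTranslationBounded m) (R : ℝ) :
    {a : ℝ | m a ≠ 0 ∧ |a| ≤ R}.Finite := by
  have hsmall : ∀ᶠ a in cofinite, (m a : ℝ) / (1 + a ^ 2) < 1 / (1 + R ^ 2) :=
    hm.summable_div_one_add_sq.tendsto_cofinite_zero.eventually_lt_const (by positivity)
  refine Set.Finite.subset hsmall fun a ⟨hma, haR⟩ => ?_
  simp only [Set.mem_compl_iff, Set.mem_ofPred_eq, not_lt]
  have hone : (1 : ℝ) ≤ m a := mod_cast Nat.one_le_iff_ne_zero.2 hma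
  have hsq : a ^ 2 ≤ R ^ 2 := sq_le_sq' (abs_le.1 haR).1 (abs_le.1 haR).2
  gcongr

end IsTranslationBounded

theorem exists_mem_Icc_forall_le_dist (T : Finset ℝ) {δ : ℝ} (hδ : T.card * (2 * δ) < 1) (x : ℝ) :
    ∃ R ∈ Set.Icc x (x + 1), ∀ a ∈ T, δ ≤ dist R a := by
  by_contra! H
  have hcover : Set.Icc x (x + 1) ⊆ ⋃ a ∈ T, ball a δ := fun R hR => by
    simpa only [Set.mem_iUnion, mem_ball, exists_prop] using H R hR
  have hvol : (1 : ℝ≥0∞) ≤ ENNReal.ofReal (T.card * (2 * δ)) := by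
    calc (1 : ℝ≥0∞) = volume (Set.Icc x (x + 1)) := by simp
      _ ≤ ∑ a ∈ T, volume (ball a δ) :=
        (measure_mono hcover).trans (measure_biUnion_finset_le T _)
      _ = _ := by simp [Real.volume_ball, ENNReal.ofReal_mul]
  exact (ENNReal.one_le_ofReal.1 hvol).not_gt hδ

theorem IsTranslationBounded.exists_mem_Icc_forall_le_abs_sub (hm : IsTranslationBounded m) :
    ∃ δ : ℝ, 0 < δ ∧ ∀ x : ℝ, ∃ R ∈ Set.Icc x (x + 1), ∀ a : ℝ, m a ≠ 0 → δ ≤ |R - a| := by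
  obtain ⟨N, hN⟩ := hm
  have hN0 : 0 ≤ N := by simpa using hN 0 ∅ (by simp)
  refine ⟨1 / (2 * (N + 2)), by positivity, fun x => ?_⟩
  have hδ : 1 / (2 * (N + 2)) ≤ 1 / 2 := by gcongr; linarith
  have hfin : {a : ℝ | m a ≠ 0 ∧ |a - (x + 1 / 2)| ≤ 1}.Finite := by
    refine (IsTranslationBounded.finite_setOf_abs_le ⟨N, hN⟩ (|x + 1 / 2| + 1)).subset ?_
    rintro a ⟨hma, ha⟩
    exact ⟨hma, by linarith [abs_sub_abs_le_abs_sub a (x + 1 / 2)]⟩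
  have hcard : (hfin.toFinset.card : ℝ) ≤ N := by
    refine le_trans ?_ (hN (x + 1 / 2) hfin.toFinset fun a ha => (hfin.mem_toFinset.1 ha).2)
    rw [Finset.card_eq_sum_ones, Nat.cast_sum]
    exact Finset.sum_le_sum fun a ha =>
      mod_cast Nat.one_le_iff_ne_zero.2 (hfin.mem_toFinset.1 ha).1
  obtain ⟨R, hR, hdist⟩ := exists_mem_Icc_forall_le_dist hfin.toFinset
    (δ := 1 / (2 * (N + 2))) (by
      rw [show 2 * (1 / (2 * (N + 2))) = 1 / (N + 2) by field_simp, mul_one_div,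
        div_lt_one (by positivity)]
      linarith) x
  refine ⟨R, hR, fun a hma => ?_⟩
  by_cases ha : |a - (x + 1 / 2)| ≤ 1
  · exact hdist a (hfin.mem_toFinset.2 ⟨hma, ha⟩)
  · have hRx : |R - (x + 1 / 2)| ≤ 1 / 2 := by
      rw [abs_le]
      constructor <;> linarith [hR.1, hR.2]
    rw [abs_sub_comm]
    linarith [abs_sub_le a R (x + 1 / 2)]

end TranslationBounded

section RealZeros

variable {q : ℕ → ℂ} {ω : ℕ → ℝ} {B : ℝ}

theorem ne_zero_of_mem_ball_abs_im {f : ℂ → ℂ} (hreal : ∀ z, f z = 0 → z.im = 0) {z w : ℂ}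
    (hw : w ∈ ball z |z.im|) : f w ≠ 0 := fun h => by
  have him := Complex.abs_im_le_norm (w - z)
  rw [Complex.sub_im, hreal w h, zero_sub, abs_neg] at him
  exact him.not_gt (mem_ball_iff_norm.1 hw)

theorem isTranslationBounded_analyticOrderNatAt_dserC (hq : Summable fun i => ‖q i‖)
    (hB : ∀ i, |ω i| ≤ B) (hne : ∃ z, dserC q ω z ≠ 0)
    (hreal : ∀ z, dserC q ω z = 0 → z.im = 0) :
    IsTranslationBounded fun a => analyticOrderNatAt (dserC q ω) a := by
  obtain ⟨c, hc, hmin⟩ := exists_pos_le_norm_dserC hq hB hne 1 one_pos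
  have hlow (x : ℝ) : c ≤ ‖dserC q ω (x + I)‖ := hmin _ (by simp) fun w hw =>
    ne_zero_of_mem_ball_abs_im hreal (z := x + I) (by simpa using hw)
  set M : ℝ := max 1 ((∑' i, ‖q i‖) * Real.exp (2 * Real.pi * B * 4))
  refine ⟨Real.log (M / c) / Real.log (3 / 2), fun x S hS => ?_⟩
  have hfar : ∀ a ∈ S.map ⟨_, ofReal_injective⟩, a ∈ closedBall (x + I) 2 := by
    simp only [Finset.mem_map, Function.Embedding.coeFn_mk, forall_exists_index, and_imp,
      forall_apply_eq_imp_iff₂, mem_closedBall_iff_norm]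
    intro a ha
    calc ‖(a : ℂ) - (x + I)‖ = ‖((a - x : ℝ) : ℂ) - I‖ := by push_cast; ring_nf
      _ ≤ |a - x| + 1 := (norm_sub_le _ _).trans_eq (by rw [norm_real, norm_I, Real.norm_eq_abs])
      _ ≤ 2 := by linarith [hS a ha]
  have hbound : ∀ z ∈ sphere (x + I) 3, ‖dserC q ω z‖ ≤ M := fun z hz => by
    refine (norm_dserC_le hq hB ?_).trans (le_max_right _ _)
    have him := Complex.abs_im_le_norm (z - (x + I))
    rw [mem_sphere_iff_norm.1 hz] at him
    simp only [sub_im, add_im, ofReal_im, I_im, zero_add] at him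
    rw [abs_le] at him ⊢
    constructor <;> linarith
  calc ∑ a ∈ S, (analyticOrderNatAt (dserC q ω) a : ℝ)
      = ∑ a ∈ S.map ⟨_, ofReal_injective⟩, (analyticOrderNatAt (dserC q ω) a : ℝ) := by simp
    _ ≤ Real.log (M / ‖dserC q ω (x + I)‖) / Real.log (3 / 2) :=
      sum_analyticOrderNatAt_le (differentiable_dserC hq hB) two_pos (by norm_num)
        (le_max_left _ _) (norm_pos_iff.1 (hc.trans_le (hlow x))) hbound hfar
    _ ≤ Real.log (M / c) / Real.log (3 / 2) := by
      have := hc.trans_le (hlow x)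
      gcongr
      exact hlow x

theorem exists_norm_logDeriv_dserC_le (hq : Summable fun i => ‖q i‖) (hB : ∀ i, |ω i| ≤ B)
    (hne : ∃ z, dserC q ω z ≠ 0) (K : ℝ) {δ : ℝ} (hδ : 0 < δ) :
    ∃ M : ℝ, ∀ z : ℂ, |z.im| ≤ K → (∀ w ∈ ball z δ, dserC q ω w ≠ 0) →
      ‖logDeriv (dserC q ω) z‖ ≤ M := by
  obtain ⟨c, hc, hmin⟩ := exists_pos_le_norm_dserC hq hB hne K hδ
  refine ⟨(∑' i, ‖q i * (2 * Real.pi * I * ω i)‖) * Real.exp (2 * Real.pi * B * K) / c,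
    fun z hz hw => ?_⟩
  rw [logDeriv_apply, norm_div, (hasDerivAt_dserC hq hB z).deriv]
  have hderiv := norm_dserC_le (summable_norm_mul_two_pi_I_mul hq hB) hB hz
  have hlow := hmin z hz hw
  gcongr

end RealZeros

section RectIntegral

/-- The contour integral of `F` along the boundary of the rectangle with opposite corners `z` and
`w`, counterclockwise when `z` is the lower left corner; it has the shape of Mathlib's Cauchy
theorem for rectangles. -/
def rectIntegral (F : ℂ → ℂ) (z w : ℂ) : ℂ :=
  (∫ x in z.re..w.re, F (x + z.im * I)) - (∫ x in z.re..w.re, F (x + w.im * I)) +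
    I * (∫ y in z.im..w.im, F (w.re + y * I)) - I * (∫ y in z.im..w.im, F (z.re + y * I))

/-- The union of the four sides of the rectangle with opposite corners `z` and `w`, the path of
integration of `rectIntegral`. -/
def rectBoundary (z w : ℂ) : Set ℂ :=
  (Set.uIcc z.re w.re ×ℂ {z.im, w.im}) ∪ ({z.re, w.re} ×ℂ Set.uIcc z.im w.im)

variable {F G : ℂ → ℂ} {z w : ℂ}

theorem rectBoundary_subset : rectBoundary z w ⊆ Set.uIcc z.re w.re ×ℂ Set.uIcc z.im w.im := by
  have hpair (s t : ℝ) : {s, t} ⊆ Set.uIcc s t :=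
    Set.pair_subset Set.left_mem_uIcc Set.right_mem_uIcc
  exact Set.union_subset (fun u hu => ⟨hu.1, hpair _ _ hu.2⟩) fun u hu => ⟨hpair _ _ hu.1, hu.2⟩

theorem horizontal_mem_rectBoundary {x y : ℝ} (hx : x ∈ Set.uIcc z.re w.re)
    (hy : y ∈ ({z.im, w.im} : Set ℝ)) : (x + y * I : ℂ) ∈ rectBoundary z w :=
  .inl ⟨by simpa using hx, by simpa using hy⟩

theorem vertical_mem_rectBoundary {x y : ℝ} (hx : x ∈ ({z.re, w.re} : Set ℝ))
    (hy : y ∈ Set.uIcc z.im w.im) : (x + y * I : ℂ) ∈ rectBoundary z w :=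
  .inr ⟨by simpa using hx, by simpa using hy⟩

theorem rectIntegral_congr (h : Set.EqOn F G (rectBoundary z w)) :
    rectIntegral F z w = rectIntegral G z w := by
  have hhor : ∀ y ∈ ({z.im, w.im} : Set ℝ),
      ∫ x in z.re..w.re, F (x + y * I) = ∫ x in z.re..w.re, G (x + y * I) := fun y hy =>
    intervalIntegral.integral_congr fun x hx => h (horizontal_mem_rectBoundary hx hy)
  have hver : ∀ x ∈ ({z.re, w.re} : Set ℝ),
      ∫ y in z.im..w.im, F (x + y * I) = ∫ y in z.im..w.im, G (x + y * I) := fun x hx =>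
    intervalIntegral.integral_congr fun y hy => h (vertical_mem_rectBoundary hx hy)
  unfold rectIntegral
  rw [hhor _ (by simp), hhor _ (by simp), hver _ (by simp), hver _ (by simp)]

theorem intervalIntegrable_of_continuousOn_rectBoundary (h : ContinuousOn F (rectBoundary z w)) :
    (∀ y ∈ ({z.im, w.im} : Set ℝ),
      IntervalIntegrable (fun x : ℝ => F (x + y * I)) volume z.re w.re) ∧
    ∀ x ∈ ({z.re, w.re} : Set ℝ),
      IntervalIntegrable (fun y : ℝ => F (x + y * I)) volume z.im w.im :=
  ⟨fun _ hy => (h.comp (by fun_prop) fun _ hx =>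
      horizontal_mem_rectBoundary hx hy).intervalIntegrable,
    fun _ hx => (h.comp (by fun_prop) fun _ hy =>
      vertical_mem_rectBoundary hx hy).intervalIntegrable⟩

theorem rectIntegral_add (hF : ContinuousOn F (rectBoundary z w))
    (hG : ContinuousOn G (rectBoundary z w)) :
    rectIntegral (fun u => F u + G u) z w = rectIntegral F z w + rectIntegral G z w := by
  obtain ⟨hFh, hFv⟩ := intervalIntegrable_of_continuousOn_rectBoundary hF
  obtain ⟨hGh, hGv⟩ := intervalIntegrable_of_continuousOn_rectBoundary hG
  unfold rectIntegral
  rw [intervalIntegral.integral_add (hFh _ (by simp)) (hGh _ (by simp)),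
    intervalIntegral.integral_add (hFh _ (by simp)) (hGh _ (by simp)),
    intervalIntegral.integral_add (hFv _ (by simp)) (hGv _ (by simp)),
    intervalIntegral.integral_add (hFv _ (by simp)) (hGv _ (by simp))]
  ring

theorem rectIntegral_const_mul (c : ℂ) :
    rectIntegral (fun u => c * F u) z w = c * rectIntegral F z w := by
  simp only [rectIntegral, intervalIntegral.integral_const_mul]
  ring

theorem rectIntegral_finsetSum {ι : Type*} (S : Finset ι) {F : ι → ℂ → ℂ}
    (hF : ∀ i ∈ S, ContinuousOn (F i) (rectBoundary z w)) :
    rectIntegral (fun u => ∑ i ∈ S, F i u) z w = ∑ i ∈ S, rectIntegral (F i) z w := by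
  induction S using Finset.cons_induction with
  | empty => simp [rectIntegral]
  | cons i S hi ih =>
    rw [Finset.forall_mem_cons] at hF
    simp only [Finset.sum_cons]
    rw [rectIntegral_add hF.1 (continuousOn_finsetSum _ hF.2), ih hF.2]

theorem rectIntegral_eq_zero_of_differentiableOn
    (hF : DifferentiableOn ℂ F (Set.uIcc z.re w.re ×ℂ Set.uIcc z.im w.im)) :
    rectIntegral F z w = 0 :=
  Complex.integral_boundary_rect_eq_zero_of_differentiableOn F z w hF

theorem sub_ne_zero_of_mem_rectBoundary {p u : ℂ}
    (hp : p ∈ Set.Ioo z.re w.re ×ℂ Set.Ioo z.im w.im) (hu : u ∈ rectBoundary z w) : u - p ≠ 0 := by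
  rw [sub_ne_zero]
  rintro rfl
  obtain ⟨⟨h1, h2⟩, h3, h4⟩ := hp
  rcases hu with ⟨-, h | h⟩ | ⟨h | h, -⟩
  exacts [h3.ne' h, h4.ne h, h1.ne' h, h2.ne h]

theorem log_I_mul {v : ℂ} (hv : 0 < v.re) : log (I * v) = log v + Real.pi / 2 * I := by
  have hv0 : v ≠ 0 := fun h => by simp [h] at hv
  have harg := abs_lt.1 (abs_arg_lt_pi_div_two_iff.2 (.inl hv))
  rw [log_mul_eq_add_log_iff I_ne_zero hv0 |>.2, log_I, add_comm]
  rw [arg_I]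
  constructor <;> linarith [Real.pi_pos]

/-- The rotation `c` moves the segment away from the branch cut of the logarithm. -/
theorem mul_intervalIntegral_inv_eq_log_sub_log {a b : ℝ} {c d e : ℂ}
    (h : ∀ t ∈ Set.uIcc a b, 0 < (c * (e + t * d)).re) :
    d * ∫ t in a..b, (e + t * d)⁻¹ = log (c * (e + b * d)) - log (c * (e + a * d)) := by
  have hne : ∀ t ∈ Set.uIcc a b, c * (e + t * d) ≠ 0 := fun t ht h0 => by
    simpa [h0] using h t ht
  rw [← intervalIntegral.integral_const_mul]
  refine intervalIntegral.integral_eq_sub_of_hasDerivAt (f := fun t => log (c * (e + t * d)))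
    (fun t ht => ?_) ?_
  · have hc := left_ne_zero_of_mul (hne t ht)
    have hlin : HasDerivAt (fun t : ℝ => c * (e + t * d)) (c * (1 * d)) t :=
      (((hasDerivAt_id t).ofReal_comp.mul_const d).const_add e).const_mul c
    refine (hlin.clog_real (.inl (h t ht))).congr_deriv ?_
    rw [one_mul, mul_div_mul_left _ _ hc, div_eq_mul_inv]
  · refine ContinuousOn.intervalIntegrable (continuousOn_const.mul ?_)
    exact ContinuousOn.inv₀ (by fun_prop) fun t ht => right_ne_zero_of_mul (hne t ht)

/-- On each side a rotated branch of `log (u - p)` is a primitive, and passing from one branch to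
the next at a corner contributes `π / 2 * I`. -/
theorem rectIntegral_inv_sub {p : ℂ} (hp : p ∈ Set.Ioo z.re w.re ×ℂ Set.Ioo z.im w.im) :
    rectIntegral (fun u => (u - p)⁻¹) z w = 2 * Real.pi * I := by
  obtain ⟨⟨h1, h2⟩, h3, h4⟩ := hp
  have hbottom := mul_intervalIntegral_inv_eq_log_sub_log (a := z.re) (b := w.re) (c := I) (d := 1)
    (e := z.im * I - p) fun t _ => by simpa using h3
  have htop := mul_intervalIntegral_inv_eq_log_sub_log (a := z.re) (b := w.re) (c := -I) (d := 1)
    (e := w.im * I - p) fun t _ => by simpa using h4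
  have hright := mul_intervalIntegral_inv_eq_log_sub_log (a := z.im) (b := w.im) (c := 1) (d := I)
    (e := w.re - p) fun t _ => by simpa using h2
  have hleft := mul_intervalIntegral_inv_eq_log_sub_log (a := z.im) (b := w.im) (c := -1) (d := I)
    (e := z.re - p) fun t _ => by simpa using h1
  have hlowerRight := log_I_mul (v := w.re + z.im * I - p) (by simpa using h2)
  have hupperRight := log_I_mul (v := -I * (w.re + w.im * I - p)) (by simpa using h4)
  have hupperLeft := log_I_mul (v := -(z.re + w.im * I - p)) (by simpa using h1)
  have hlowerLeft := log_I_mul (v := I * (z.re + z.im * I - p)) (by simpa using h3)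
  have hII (v : ℂ) : I * (I * v) = -v := by rw [← mul_assoc, I_mul_I, neg_one_mul]
  simp only [neg_mul, mul_neg, hII, neg_neg, one_mul, mul_one, add_comm_sub, ← add_sub_assoc,
    add_comm (_ * I)] at *
  simp only [rectIntegral, hbottom, htop, hright, hleft]
  linear_combination hlowerRight + hupperRight + hupperLeft + hlowerLeft

theorem rectIntegral_inv_sub_mul {Φ : ℂ → ℂ} (hΦ : Differentiable ℂ Φ) {p : ℂ}
    (hp : p ∈ Set.Ioo z.re w.re ×ℂ Set.Ioo z.im w.im) :
    rectIntegral (fun u => (u - p)⁻¹ * Φ u) z w = 2 * Real.pi * I * Φ p := by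
  have hslope : Differentiable ℂ (dslope Φ p) := differentiable_iterate_dslope hΦ p 1
  have hcongr : Set.EqOn (fun u => (u - p)⁻¹ * Φ u) (fun u => dslope Φ p u + Φ p * (u - p)⁻¹)
      (rectBoundary z w) := fun u hu => by
    have hne := sub_ne_zero_of_mem_rectBoundary hp hu
    have hsub := sub_smul_dslope Φ p u
    rw [smul_eq_mul] at hsub
    field_simp
    linear_combination -hsub
  rw [rectIntegral_congr hcongr, rectIntegral_add hslope.continuous.continuousOn,
    rectIntegral_eq_zero_of_differentiableOn hslope.differentiableOn, rectIntegral_const_mul,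
    rectIntegral_inv_sub hp]
  · ring
  · exact continuousOn_const.mul (ContinuousOn.inv₀ (by fun_prop) fun u hu =>
      sub_ne_zero_of_mem_rectBoundary hp hu)

theorem logDeriv_prod_pow_mul {S : Finset ℂ} {n : ℂ → ℕ} {g : ℂ → ℂ} {u : ℂ}
    (hS : ∀ a ∈ S, u - a ≠ 0) (hg : DifferentiableAt ℂ g u) (hgu : g u ≠ 0) :
    logDeriv (fun v => (∏ a ∈ S, (v - a) ^ n a) * g v) u =
      (∑ a ∈ S, n a * (u - a)⁻¹) + logDeriv g u := by
  rw [logDeriv_mul u (Finset.prod_ne_zero_iff.2 fun a ha => pow_ne_zero _ (hS a ha)) hgu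
    (by fun_prop) hg, logDeriv_prod (f := fun a v => (v - a) ^ n a)
    (fun a ha => pow_ne_zero _ (hS a ha)) fun a _ => by fun_prop]
  congr 1
  refine Finset.sum_congr rfl fun a _ => ?_
  rw [logDeriv_fun_pow (by fun_prop)]
  simp [logDeriv_apply]

theorem rectIntegral_logDeriv_mul {f Φ : ℂ → ℂ} (hf : Differentiable ℂ f) (hne : ∃ u, f u ≠ 0)
    (hΦ : Differentiable ℂ Φ) {S : Finset ℂ}
    (hS : ∀ a ∈ S, a ∈ Set.Ioo z.re w.re ×ℂ Set.Ioo z.im w.im)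
    (hzeros : ∀ u ∈ Set.uIcc z.re w.re ×ℂ Set.uIcc z.im w.im, f u = 0 → u ∈ S) :
    rectIntegral (fun u => logDeriv f u * Φ u) z w =
      2 * Real.pi * I * ∑ a ∈ S, analyticOrderNatAt f a * Φ a := by
  obtain ⟨g, hg, hgS, hfg⟩ := exists_eq_prod_pow_analyticOrderNatAt_mul hf hne S
  have hg0 : ∀ u ∈ Set.uIcc z.re w.re ×ℂ Set.uIcc z.im w.im, g u ≠ 0 := fun u hu h0 =>
    hgS u (hzeros u hu (by rw [congrFun hfg u, h0, mul_zero])) h0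
  have hcongr : Set.EqOn (fun u => logDeriv f u * Φ u)
      (fun u => (∑ a ∈ S, analyticOrderNatAt f a * ((u - a)⁻¹ * Φ u)) + logDeriv g u * Φ u)
      (rectBoundary z w) := fun u hu => by
    have hlog := logDeriv_prod_pow_mul (n := analyticOrderNatAt f)
      (fun a ha => sub_ne_zero_of_mem_rectBoundary (hS a ha) hu) (hg u)
      (hg0 u (rectBoundary_subset hu))
    rw [← hfg] at hlog
    simp only [hlog, add_mul, Finset.sum_mul, mul_assoc]
  have hpoles : ∀ a ∈ S, ContinuousOn (fun u => analyticOrderNatAt f a * ((u - a)⁻¹ * Φ u))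
      (rectBoundary z w) := fun a ha => continuousOn_const.mul
    (.mul (.inv₀ (by fun_prop) fun u hu => sub_ne_zero_of_mem_rectBoundary (hS a ha) hu)
      hΦ.continuous.continuousOn)
  have hregular : DifferentiableOn ℂ (fun u => logDeriv g u * Φ u)
      (Set.uIcc z.re w.re ×ℂ Set.uIcc z.im w.im) := by
    have hderiv := differentiableOn_univ.1 (hg.differentiableOn.deriv isOpen_univ)
    exact (hderiv.differentiableOn.div hg.differentiableOn hg0).mul hΦ.differentiableOn
  rw [rectIntegral_congr hcongr, rectIntegral_add (continuousOn_finsetSum _ hpoles)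
    (hregular.continuousOn.mono rectBoundary_subset), rectIntegral_finsetSum _ hpoles,
    rectIntegral_eq_zero_of_differentiableOn hregular, add_zero, Finset.mul_sum]
  refine Finset.sum_congr rfl fun a ha => ?_
  rw [rectIntegral_const_mul, rectIntegral_inv_sub_mul hΦ (hS a ha)]
  ring

end RectIntegral

section ContourLimit

variable {f Φ : ℂ → ℂ} {a b : ℕ → ℝ} {s C : ℝ}

theorem IsTranslationBounded.summable_mul {m : ℝ → ℕ} (hm : IsTranslationBounded m) {g : ℝ → ℂ}
    (hg : ∀ x, ‖g x‖ ≤ C / (1 + x ^ 2)) : Summable fun x => (m x : ℂ) * g x := by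
  refine .of_norm_bounded (hm.summable_div_one_add_sq.mul_left C) fun x => ?_
  calc ‖(m x : ℂ) * g x‖ ≤ m x * (C / (1 + x ^ 2)) := by
        rw [norm_mul, norm_natCast]
        gcongr
        exact hg x
    _ = C * (m x / (1 + x ^ 2)) := by ring

theorem integrable_of_norm_le_div_one_add_sq {g : ℝ → ℂ} (hg : Continuous g)
    (hC : ∀ x, ‖g x‖ ≤ C / (1 + x ^ 2)) : Integrable g :=
  (integrable_inv_one_add_sq.const_mul C).mono' hg.aestronglyMeasurable (ae_of_all _ hC)

theorem tendsto_tsum_indicator_Icc {g : ℝ → ℂ} (hg : Summable g) (ha : Tendsto a atTop atBot)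
    (hb : Tendsto b atTop atTop) :
    Tendsto (fun k => ∑' x, (Set.Icc (a k) (b k)).indicator g x) atTop (𝓝 (∑' x, g x)) := by
  refine tendsto_tsum_of_dominated_convergence hg.norm (fun x => ?_)
    (.of_forall fun _ _ => norm_indicator_le_norm_self _ _)
  refine tendsto_const_nhds.congr' ?_
  filter_upwards [ha.eventually_le_atBot x, hb.eventually_ge_atTop x] with k hak hbk
  rw [Set.indicator_of_mem (Set.mem_Icc.2 ⟨hak, hbk⟩)]

theorem tendsto_intervalIntegral_vertical_zero {F : ℂ → ℂ} {K : ℝ}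
    (hF : ∀ k, ∀ y ∈ Set.uIcc (-s) s, ‖F (a k + y * I)‖ ≤ K / (1 + a k ^ 2))
    (ha : Tendsto (fun k => |a k|) atTop atTop) :
    Tendsto (fun k => ∫ y in (-s)..s, F (a k + y * I)) atTop (𝓝 0) := by
  have hdecay : Tendsto (fun k => K / (1 + a k ^ 2)) atTop (𝓝 0) := by
    refine .const_div_atTop (tendsto_atTop_add_const_left _ _ ?_) K
    simpa only [Function.comp_def, sq_abs] using (tendsto_pow_atTop two_ne_zero).comp ha
  refine squeeze_zero_norm (fun k => intervalIntegral.norm_integral_le_of_norm_le_const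
    fun y hy => hF k y (Set.uIoc_subset_uIcc hy)) ?_
  simpa only [zero_mul] using hdecay.mul_const |s - -s|

theorem eq_ofReal_re_of_im_eq_zero {z : ℂ} (hz : z.im = 0) : z = (z.re : ℂ) :=
  Complex.ext rfl hz

theorem rectIntegral_logDeriv_mul_eq_tsum (hf : Differentiable ℂ f) (hne : ∃ z, f z ≠ 0)
    (hreal : ∀ z, f z = 0 → z.im = 0)
    (hm : IsTranslationBounded fun x => analyticOrderNatAt f x)
    (hΦ : Differentiable ℂ Φ) (hs : 0 < s) {a b : ℝ} (hab : a ≤ b) (ha : f a ≠ 0) (hb : f b ≠ 0) :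
    rectIntegral (fun z => logDeriv f z * Φ z) ⟨a, -s⟩ ⟨b, s⟩ = 2 * Real.pi * I *
      ∑' x : ℝ, (Set.Icc a b).indicator (fun x : ℝ => analyticOrderNatAt f x * Φ x) x := by
  have hfin : {x : ℝ | analyticOrderNatAt f x ≠ 0 ∧ x ∈ Set.Icc a b}.Finite :=
    (hm.finite_setOf_abs_le (max |a| |b|)).subset fun x hx =>
      ⟨hx.1, abs_le_max_abs_abs hx.2.1 hx.2.2⟩
  rw [rectIntegral_logDeriv_mul (S := hfin.toFinset.map ⟨_, ofReal_injective⟩) hf hne hΦ,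
    tsum_eq_sum (s := hfin.toFinset), Finset.sum_map]
  · refine congrArg _ (Finset.sum_congr rfl fun x hx => ?_)
    rw [Set.indicator_of_mem (hfin.mem_toFinset.1 hx).2]
    rfl
  · intro x hx
    by_cases hxI : x ∈ Set.Icc a b
    · have hx0 : analyticOrderNatAt f x = 0 := by
        simpa only [hfin.mem_toFinset, Set.mem_ofPred_eq, hxI, and_true, not_not] using hx
      rw [Set.indicator_of_mem hxI, hx0, Nat.cast_zero, zero_mul]
    · exact Set.indicator_of_notMem hxI _
  · simp only [Finset.mem_map, Function.Embedding.coeFn_mk, forall_exists_index, and_imp,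
      forall_apply_eq_imp_iff₂]
    intro x hx
    obtain ⟨hx0, hax, hxb⟩ := hfin.mem_toFinset.1 hx
    rw [analyticOrderNatAt_ne_zero_iff hf hne] at hx0
    refine ⟨⟨hax.lt_of_ne ?_, hxb.lt_of_ne ?_⟩, by simpa using hs⟩
    · rintro rfl
      exact ha hx0
    · rintro rfl
      exact hb hx0
  · intro u hu hu0
    have hur := eq_ofReal_re_of_im_eq_zero (hreal u hu0)
    refine Finset.mem_map.2 ⟨u.re, hfin.mem_toFinset.2 ⟨?_, ?_⟩, hur.symm⟩
    · rwa [← hur, analyticOrderNatAt_ne_zero_iff hf hne]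
    · exact Set.uIcc_of_le hab ▸ hu.1

theorem integrable_logDeriv_mul_line (hf : Differentiable ℂ f)
    (hreal : ∀ z, f z = 0 → z.im = 0)
    (hlog : ∀ δ > 0, ∃ M, ∀ z : ℂ, |z.im| ≤ s → (∀ w ∈ ball z δ, f w ≠ 0) → ‖logDeriv f z‖ ≤ M)
    (hΦ : Continuous Φ) (hC : ∀ z : ℂ, |z.im| ≤ s → ‖Φ z‖ ≤ C / (1 + z.re ^ 2)) (hs : 0 < s)
    {t : ℝ} (ht : |t| = s) : Integrable fun x : ℝ => logDeriv f (x + t * I) * Φ (x + t * I) := by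
  obtain ⟨M, hM⟩ := hlog s hs
  have him (x : ℝ) : |(x + t * I : ℂ).im| = s := by simpa using ht
  refine Integrable.bdd_mul (c := M) (integrable_of_norm_le_div_one_add_sq (C := C) (by fun_prop)
    fun x => by simpa using hC (x + t * I) (him x).le) ?_ (ae_of_all _ fun x => ?_)
  · exact (((measurable_deriv f).div hf.continuous.measurable).comp
      (by fun_prop : Measurable fun x : ℝ => (x + t * I : ℂ))).aestronglyMeasurable
  · exact hM _ (him x).le fun w hw => ne_zero_of_mem_ball_abs_im hreal ((him x).symm ▸ hw)

theorem norm_logDeriv_mul_vertical_le (hreal : ∀ z, f z = 0 → z.im = 0) {δ M : ℝ}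
    (hM : ∀ z : ℂ, |z.im| ≤ s → (∀ w ∈ ball z δ, f w ≠ 0) → ‖logDeriv f z‖ ≤ M)
    (hC : ∀ z : ℂ, |z.im| ≤ s → ‖Φ z‖ ≤ C / (1 + z.re ^ 2)) {z : ℂ} (hz : |z.im| ≤ s)
    (hδ : ∀ x : ℝ, f x = 0 → δ ≤ |z.re - x|) :
    ‖logDeriv f z * Φ z‖ ≤ M * C / (1 + z.re ^ 2) := by
  have hlog : ‖logDeriv f z‖ ≤ M := by
    refine hM z hz fun w hw hw0 => ?_
    have hre := hδ w.re (by rwa [← eq_ofReal_re_of_im_eq_zero (hreal w hw0)])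
    have hnorm := abs_re_le_norm (z - w)
    rw [sub_re] at hnorm
    exact (hre.trans hnorm).not_gt (by rw [← dist_eq_norm, dist_comm]; exact hw)
  rw [norm_mul, mul_div_assoc]
  gcongr
  · exact (norm_nonneg _).trans hlog
  · exact hC z hz

/-- Residues are summed over rectangles whose vertical sides escape to `±∞` while keeping a fixed
distance from the zeros. -/
theorem tsum_analyticOrderNatAt_mul_eq_sub_integral (hf : Differentiable ℂ f)
    (hne : ∃ z, f z ≠ 0) (hreal : ∀ z, f z = 0 → z.im = 0)
    (hm : IsTranslationBounded fun x => analyticOrderNatAt f x)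
    (hlog : ∀ δ > 0, ∃ M, ∀ z : ℂ, |z.im| ≤ s → (∀ w ∈ ball z δ, f w ≠ 0) → ‖logDeriv f z‖ ≤ M)
    (hΦ : Differentiable ℂ Φ) (hC : ∀ z : ℂ, |z.im| ≤ s → ‖Φ z‖ ≤ C / (1 + z.re ^ 2))
    (hs : 0 < s) :
    2 * Real.pi * I * ∑' x : ℝ, analyticOrderNatAt f x * Φ x =
      (∫ x : ℝ, logDeriv f (x + (-s : ℝ) * I) * Φ (x + (-s : ℝ) * I)) -
        ∫ x : ℝ, logDeriv f (x + s * I) * Φ (x + s * I) := by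
  obtain ⟨δ, hδ, hgood⟩ := hm.exists_mem_Icc_forall_le_abs_sub
  simp only [analyticOrderNatAt_ne_zero_iff hf hne] at hgood
  obtain ⟨M, hM⟩ := hlog δ hδ
  choose b hb hbδ using fun k : ℕ => hgood k
  choose a ha haδ using fun k : ℕ => hgood (-(k : ℝ) - 1)
  have hbT : Tendsto b atTop atTop :=
    tendsto_atTop_mono (fun k => (hb k).1) tendsto_natCast_atTop_atTop
  have haT : Tendsto a atTop atBot :=
    tendsto_atBot_mono (fun k => (ha k).2.trans_eq (sub_add_cancel _ _))
      (tendsto_neg_atTop_atBot.comp tendsto_natCast_atTop_atTop)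
  have hab (k : ℕ) : a k ≤ b k := by linarith [(ha k).2, (hb k).1, k.cast_nonneg (α := ℝ)]
  have hne_of_far {c : ℝ} (hc : ∀ x : ℝ, f x = 0 → δ ≤ |c - x|) : f c ≠ 0 := fun h0 =>
    hδ.not_ge (by simpa using hc c h0)
  have hvert {c : ℕ → ℝ} (hc : ∀ k (x : ℝ), f x = 0 → δ ≤ |c k - x|)
      (hcT : Tendsto (fun k => |c k|) atTop atTop) : Tendsto (fun k => ∫ y in (-s)..s,
        logDeriv f (c k + y * I) * Φ (c k + y * I)) atTop (𝓝 0) := by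
    refine tendsto_intervalIntegral_vertical_zero (F := fun z => logDeriv f z * Φ z)
      (K := M * C) (fun k y hy => ?_) hcT
    rw [Set.uIcc_of_le (by linarith), Set.mem_Icc, ← abs_le] at hy
    simpa using norm_logDeriv_mul_vertical_le hreal hM hC (z := c k + y * I) (by simpa using hy)
      (by simpa using hc k)
  have hint {t : ℝ} (ht : |t| = s) := intervalIntegral_tendsto_integral
    (integrable_logDeriv_mul_line hf hreal hlog hΦ.continuous hC hs ht) haT hbT
  have hrect := (((hint ((abs_neg s).trans (abs_of_pos hs))).sub (hint (abs_of_pos hs))).add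
    ((hvert hbδ (tendsto_abs_atTop_atTop.comp hbT)).const_mul I)).sub
    ((hvert haδ (tendsto_abs_atBot_atTop.comp haT)).const_mul I)
  have hresidues := (tendsto_tsum_indicator_Icc (hm.summable_mul fun x => by
    simpa using hC x (by simpa using hs.le)) haT hbT).const_mul (2 * Real.pi * I)
  rw [mul_zero, add_zero, sub_zero] at hrect
  refine tendsto_nhds_unique (hresidues.congr fun k => ?_) hrect
  exact (rectIntegral_logDeriv_mul_eq_tsum hf hne hreal hm hΦ hs (hab k)
    (hne_of_far (haδ k)) (hne_of_far (hbδ k))).symm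

end ContourLimit

section FourierLaplace

/-- The *Fourier–Laplace transform* of `φ`: the extension of the Fourier transform to complex
frequencies, entire when `φ` has compact support. -/
def fourierLaplace (φ : ℝ → ℂ) (z : ℂ) : ℂ :=
  ∫ t : ℝ, φ t * cexp (-(2 * Real.pi * I * z * t))

variable {φ : ℝ → ℂ} {z : ℂ} {s : ℝ}

theorem norm_cexp_neg_two_pi_I_mul_le (hz : |z.im| ≤ s) (t : ℝ) :
    ‖cexp (-(2 * Real.pi * I * z * t))‖ ≤ Real.exp (2 * Real.pi * s * |t|) := by
  have hzt : z.im * t ≤ s * |t| := (le_abs_self _).trans (by rw [abs_mul]; gcongr)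
  rw [Complex.norm_exp, Real.exp_le_exp]
  calc (-(2 * Real.pi * I * z * t)).re = 2 * Real.pi * (z.im * t) := by simp; ring
    _ ≤ 2 * Real.pi * s * |t| := by rw [mul_assoc _ s]; gcongr

theorem hasDerivAt_cexp_neg_two_pi_I_mul (z w : ℂ) :
    HasDerivAt (fun w => cexp (-(2 * Real.pi * I * z * w)))
      (-(2 * Real.pi * I * z) * cexp (-(2 * Real.pi * I * z * w))) w := by
  refine ((hasDerivAt_id w).const_mul (2 * Real.pi * I * z)).fun_neg.cexp.congr_deriv ?_
  rw [id_eq, mul_one, mul_comm]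

theorem norm_fourierLaplace_le (hφ : Continuous φ) (hsupp : HasCompactSupport φ)
    (hz : |z.im| ≤ s) :
    ‖fourierLaplace φ z‖ ≤ ∫ t, ‖φ t‖ * Real.exp (2 * Real.pi * s * |t|) := by
  refine norm_integral_le_of_norm_le
    (Continuous.integrable_of_hasCompactSupport (by fun_prop) hsupp.norm.mul_right)
    (ae_of_all _ fun t => ?_)
  rw [norm_mul]
  gcongr
  exact norm_cexp_neg_two_pi_I_mul_le hz t

theorem fourierLaplace_deriv (hφ : ContDiff ℝ 1 φ) (hsupp : HasCompactSupport φ) (z : ℂ) :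
    fourierLaplace (deriv φ) z = 2 * Real.pi * I * z * fourierLaplace φ z := by
  have := hφ.continuous
  have := hφ.continuous_deriv le_rfl
  have hparts := integral_mul_deriv_eq_deriv_mul_of_integrable
    (fun t _ => (hasDerivAt_cexp_neg_two_pi_I_mul z (t : ℂ)).comp_ofReal)
    (fun t _ => (hφ.differentiable one_ne_zero t).hasDerivAt)
    (Continuous.integrable_of_hasCompactSupport (by fun_prop) hsupp.deriv.mul_left)
    (Continuous.integrable_of_hasCompactSupport (by fun_prop) hsupp.mul_left)
    (Continuous.integrable_of_hasCompactSupport (by fun_prop) hsupp.mul_left)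
  unfold fourierLaplace
  simp_rw [mul_comm (deriv φ _), hparts]
  rw [← integral_neg, ← integral_const_mul]
  congr with t
  ring

theorem exists_norm_fourierLaplace_le (hφ : ContDiff ℝ 2 φ) (hsupp : HasCompactSupport φ) (s : ℝ) :
    ∃ C, ∀ z : ℂ, |z.im| ≤ s → ‖fourierLaplace φ z‖ ≤ C / (1 + z.re ^ 2) := by
  have hφ' : ContDiff ℝ 1 (deriv φ) := hφ.deriv'
  refine ⟨(∫ t, ‖φ t‖ * Real.exp (2 * Real.pi * s * |t|)) +
    ∫ t, ‖deriv (deriv φ) t‖ * Real.exp (2 * Real.pi * s * |t|), fun z hz => ?_⟩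
  have hbound := norm_fourierLaplace_le hφ.continuous hsupp hz
  have hbound'' := norm_fourierLaplace_le (hφ'.continuous_deriv le_rfl) hsupp.deriv.deriv hz
  have hre : z.re ^ 2 ≤ ‖2 * Real.pi * I * z‖ ^ 2 := by
    rw [← sq_abs]
    gcongr
    calc |z.re| ≤ 1 * ‖z‖ := by rw [one_mul]; exact abs_re_le_norm z
      _ ≤ 2 * Real.pi * ‖z‖ := by gcongr; linarith [Real.pi_gt_three]
      _ = ‖2 * Real.pi * I * z‖ := by simp [abs_of_pos Real.pi_pos]
  rw [fourierLaplace_deriv hφ' hsupp.deriv, fourierLaplace_deriv (hφ.of_le one_le_two) hsupp,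
    ← mul_assoc, norm_mul, norm_mul _ (2 * Real.pi * I * z), ← sq] at hbound''
  rw [le_div_iff₀ (by positivity)]
  nlinarith [mul_le_mul_of_nonneg_right hre (norm_nonneg (fourierLaplace φ z))]

theorem differentiable_fourierLaplace (hφ : Continuous φ) (hsupp : HasCompactSupport φ) :
    Differentiable ℂ (fourierLaplace φ) := by
  intro z
  refine (hasDerivAt_integral_of_dominated_loc_of_deriv_le (ball_mem_nhds z one_pos)
    (F := fun w t => φ t * cexp (-(2 * Real.pi * I * w * t)))
    (F' := fun w t => φ t * (-(2 * Real.pi * I * t) * cexp (-(2 * Real.pi * I * t * w))))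
    (bound := fun t =>
      ‖φ t‖ * (2 * Real.pi * |t| * Real.exp (2 * Real.pi * (|z.im| + 1) * |t|)))
    (.of_forall fun w => Continuous.aestronglyMeasurable (by fun_prop))
    (Continuous.integrable_of_hasCompactSupport (by fun_prop) hsupp.mul_right)
    (Continuous.aestronglyMeasurable (by fun_prop)) (ae_of_all _ fun t w hw => ?_)
    (Continuous.integrable_of_hasCompactSupport (by fun_prop) hsupp.norm.mul_right)
    (ae_of_all _ fun t w _ => ?_)).2.differentiableAt
  · have him : |w.im| ≤ |z.im| + 1 := by
      have hsub := (abs_im_le_norm (w - z)).trans (mem_ball_iff_norm.1 hw).le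
      rw [sub_im] at hsub
      linarith [abs_sub_abs_le_abs_sub w.im z.im]
    rw [norm_mul, norm_mul, mul_right_comm _ (t : ℂ) w]
    gcongr
    · simp [abs_of_pos Real.pi_pos]
    · exact norm_cexp_neg_two_pi_I_mul_le him t
  · simpa only [mul_right_comm _ (t : ℂ)] using
      (hasDerivAt_cexp_neg_two_pi_I_mul (t : ℂ) w).const_mul (φ t)

theorem fourierLaplace_add_mul_I (φ : ℝ → ℂ) (σ x : ℝ) :
    fourierLaplace φ (x + σ * I) =
      𝓕 (fun t : ℝ => φ t * Real.exp (2 * Real.pi * σ * t)) x := by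
  rw [Real.fourier_real_eq_integral_exp_smul, fourierLaplace]
  congr with t
  rw [smul_eq_mul, mul_left_comm, ofReal_exp, ← Complex.exp_add]
  congr 2
  push_cast
  linear_combination (-2 * Real.pi * σ * t : ℂ) * I_sq

theorem fourierLaplace_ofReal (φ : ℝ → ℂ) (x : ℝ) : fourierLaplace φ x = 𝓕 φ x := by
  simpa using fourierLaplace_add_mul_I φ 0 x

theorem integrable_fourierLaplace_line (hφ : ContDiff ℝ 2 φ) (hsupp : HasCompactSupport φ)
    (σ : ℝ) : Integrable fun x : ℝ => fourierLaplace φ (x + σ * I) := by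
  obtain ⟨C, hC⟩ := exists_norm_fourierLaplace_le hφ hsupp |σ|
  have hcont := (differentiable_fourierLaplace hφ.continuous hsupp).continuous
  exact integrable_of_norm_le_div_one_add_sq (by fun_prop) fun x => by
    simpa using hC (x + σ * I) (by simp)

theorem integral_fourierChar_mul_fourierLaplace (hφ : ContDiff ℝ 2 φ)
    (hsupp : HasCompactSupport φ) (σ γ : ℝ) :
    ∫ x : ℝ, 𝐞 (γ * x) * fourierLaplace φ (x + σ * I) =
      φ γ * Real.exp (2 * Real.pi * σ * γ) := by
  have hcont : Continuous fun t : ℝ => φ t * (Real.exp (2 * Real.pi * σ * t) : ℂ) := by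
    have := hφ.continuous
    fun_prop
  have hline := integrable_fourierLaplace_line hφ hsupp σ
  simp only [fourierLaplace_add_mul_I] at hline ⊢
  rw [← congrFun (hcont.fourierInv_fourier_eq
    (hcont.integrable_of_hasCompactSupport hsupp.mul_right) hline) γ, Real.fourierInv_eq]
  rfl

theorem hasSum_integral_mul_fourierLaplace {F c : ℝ → ℂ} (hc : Summable fun γ => ‖c γ‖)
    (hF : ∀ x, HasSum (fun γ => c γ * 𝐞 (γ * x)) (F x)) (hφ : ContDiff ℝ 2 φ)
    (hsupp : HasCompactSupport φ) (σ : ℝ) :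
    HasSum (fun γ => c γ * (φ γ * Real.exp (2 * Real.pi * σ * γ)))
      (∫ x : ℝ, F x * fourierLaplace φ (x + σ * I)) := by
  have hline := integrable_fourierLaplace_line hφ hsupp σ
  have hcountable : Countable (Function.support c) := hc.of_norm.countable_support.to_subtype
  have hsub {g : ℝ → ℂ} : Function.support (fun γ => c γ * g γ) ⊆ Function.support c :=
    Function.support_mul_subset_left _ _
  have hseries (x : ℝ) : ∑' γ : Function.support c,
      c γ * (𝐞 (γ * x) * fourierLaplace φ (x + σ * I)) = F x * fourierLaplace φ (x + σ * I) := by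
    simpa only [Function.comp_def, mul_assoc] using
      (((hasSum_subtype_iff_of_support_subset hsub).2 (hF x)).mul_right _).tsum_eq
  have hterm := hasSum_integral_of_summable_integral_norm (μ := (volume : Measure ℝ))
    (F := fun (γ : Function.support c) (x : ℝ) =>
      c γ * (𝐞 (γ * x) * fourierLaplace φ (x + σ * I)))
    (fun γ => (hline.bdd_mul (c := 1) (Continuous.aestronglyMeasurable (by fun_prop))
      (ae_of_all _ fun x => (Circle.norm_coe _).le)).const_mul _) ?_
  · simp only [integral_const_mul, integral_fourierChar_mul_fourierLaplace hφ hsupp,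
      hseries] at hterm
    exact (hasSum_subtype_iff_of_support_subset hsub).1 hterm
  · simp only [norm_mul, Circle.norm_coe, one_mul, integral_const_mul]
    exact (hc.subtype _).mul_right _

end FourierLaplace

section PurePoint

variable {V : Type*} {μ ν ν₁ ν₂ : PPM ℝ}

theorem exists_norm_schwartzMap_le (φ : 𝓢(ℝ, ℂ)) : ∃ C, ∀ x, ‖φ x‖ ≤ C / (1 + x ^ 2) := by
  obtain ⟨C₀, -, hC₀⟩ := φ.decay 0 0
  obtain ⟨C₂, -, hC₂⟩ := φ.decay 2 0
  refine ⟨C₀ + C₂, fun x => ?_⟩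
  have h₀ := hC₀ x
  have h₂ := hC₂ x
  simp only [pow_zero, one_mul, norm_iteratedFDeriv_zero, Real.norm_eq_abs, sq_abs] at h₀ h₂
  rw [le_div_iff₀ (by positivity)]
  linarith

theorem IsTranslationBounded.temperate {m : ℝ → ℕ} (hm : IsTranslationBounded m)
    (hμ : ∀ x, μ.mass x = m x) : μ.temperate := fun φ => by
  obtain ⟨C, hC⟩ := exists_norm_schwartzMap_le φ
  simpa only [hμ] using hm.summable_mul hC

namespace PPM

theorem var_le_ofReal_tsum {ν : PPM V} {K : V → ℝ} {A : Set V} (hK0 : ∀ x, 0 ≤ K x)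
    (hK : Summable K) (hν : ∀ x ∈ A, ‖ν.mass x‖ ≤ K x) :
    ν.var A ≤ ENNReal.ofReal (∑' x, K x) := by
  rw [ENNReal.ofReal_tsum_of_nonneg hK0 hK]
  refine le_trans (ENNReal.tsum_le_tsum fun x : A => ?_)
    (ENNReal.tsum_comp_le_tsum_of_injective Subtype.val_injective _)
  rw [← enorm_eq_nnnorm, ← ofReal_norm]
  exact ENNReal.ofReal_le_ofReal (hν x x.2)

theorem locFinite_of_forall_pos (hν : ∀ r : ℝ, 0 < r → ν.var (ball 0 r) < ⊤) :
    ν.locFinite := fun r => by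
  rcases lt_or_ge 0 r with hr | hr
  · exact hν r hr
  · simp [var, ball_eq_empty.2 hr]

theorem locFinite.summable_indicator (hν : ν.locFinite) (R : ℝ) :
    Summable ((ball (0 : ℝ) R).indicator fun γ => ‖ν.mass γ‖) := by
  rw [← summable_subtype_iff_indicator]
  simpa [Function.comp_def] using ENNReal.summable_toReal (hν R).ne

theorem locFinite.tendsto_pair_contDiffBump (hν : ν.locFinite) {γ : ℝ} {ι : Type*} {l : Filter ι}
    {β : ι → ContDiffBump γ} (hβ : Tendsto (fun i => (β i).rOut) l (𝓝 0)) :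
    Tendsto (fun i => ν.pair fun x => (β i x : ℂ)) l (𝓝 (ν.mass γ)) := by
  suffices hlim : Tendsto (fun i => ∑' x, ν.mass x * (β i x : ℂ)) l
      (𝓝 (∑' x, (Pi.single γ (ν.mass γ) : ℝ → ℂ) x)) by rwa [tsum_pi_single] at hlim
  refine tendsto_tsum_of_dominated_convergence (hν.summable_indicator (|γ| + 1)) (fun x => ?_) ?_
  · refine tendsto_const_nhds.congr' ?_
    rcases eq_or_ne x γ with rfl | hx
    · exact .of_forall fun i => by
        simp [(β i).one_of_mem_closedBall (mem_closedBall_self (β i).rIn_pos.le)]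
    · filter_upwards [hβ.eventually_lt_const (dist_pos.2 hx)] with i hi
      simp [hx, (β i).zero_of_le_dist hi.le]
  · filter_upwards [hβ.eventually_le_const one_pos] with i hi x
    by_cases hx : x ∈ ball (0 : ℝ) (|γ| + 1)
    · rw [Set.indicator_of_mem hx, norm_mul, norm_real, Real.norm_of_nonneg (β i).nonneg]
      exact mul_le_of_le_one_right (norm_nonneg _) (β i).le_one
    · rw [mem_ball_zero_iff, not_lt, Real.norm_eq_abs] at hx
      have hdist : (β i).rOut ≤ dist x γ := by
        rw [Real.dist_eq]
        linarith [abs_sub_abs_le_abs_sub x γ]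
      simpa [(β i).zero_of_le_dist hdist] using Set.indicator_nonneg (by simp) x

end PPM

theorem IsFT.unique (h₁ : IsFT μ ν₁) (h₂ : IsFT μ ν₂) (hν₁ : ν₁.locFinite)
    (hν₂ : ν₂.locFinite) : ν₁ = ν₂ := by
  suffices hmass : ν₁.mass = ν₂.mass by
    cases ν₁
    cases ν₂
    rwa [PPM.mk.injEq]
  funext γ
  let β (n : ℕ) : ContDiffBump γ :=
    ⟨1 / (n + 2), 1 / (n + 1), by positivity, by gcongr; norm_num⟩
  have hβ : Tendsto (fun n => (β n).rOut) atTop (𝓝 0) := tendsto_one_div_add_atTop_nhds_zero_nat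
  refine tendsto_nhds_unique (hν₁.tendsto_pair_contDiffBump hβ)
    ((hν₂.tendsto_pair_contDiffBump hβ).congr fun n => ?_)
  have hsupp : HasCompactSupport fun x => (β n x : ℂ) :=
    (β n).hasCompactSupport.comp_left ofReal_zero
  let φ : 𝓢(ℝ, ℂ) := hsupp.toSchwartzMap (ofRealCLM.contDiff.comp (β n).contDiff)
  exact (h₂ φ hsupp).symm.trans (h₁ φ hsupp)

end PurePoint

section DualMeasure

variable {c d : ℝ → ℂ} {s : ℝ}

/-- The pure point measure with masses `(2πi)⁻¹ (c γ e^{-2πsγ} - d γ e^{2πsγ})`. When `c` and `d`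
are the Fourier coefficients of `f'/f` on the lines `Im z = -s` and `Im z = s`, it is the Fourier
transform of the zero counting measure of `f`. -/
def PPM.ofLineCoeffs (hc : Summable fun γ => ‖c γ‖) (hd : Summable fun γ => ‖d γ‖) (s : ℝ) :
    PPM ℝ where
  mass γ := (2 * Real.pi * I)⁻¹ *
    (c γ * Real.exp (2 * Real.pi * -s * γ) - d γ * Real.exp (2 * Real.pi * s * γ))
  countable := by
    refine (hc.of_norm.countable_support.union hd.of_norm.countable_support).mono fun γ hγ => ?_
    contrapose! hγ
    simp_all

theorem PPM.exists_var_ofLineCoeffs_le (hc : Summable fun γ => ‖c γ‖)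
    (hd : Summable fun γ => ‖d γ‖) (hs : 0 ≤ s) : ∃ C : ℝ, ∀ r : ℝ,
    (PPM.ofLineCoeffs hc hd s).var (ball 0 r) ≤
      ENNReal.ofReal (C * Real.exp (2 * Real.pi * s * r)) := by
  refine ⟨∑' γ, (‖c γ‖ + ‖d γ‖), fun r => ?_⟩
  rw [← tsum_mul_right]
  refine PPM.var_le_ofReal_tsum (fun _ => by positivity) ((hc.add hd).mul_right _) fun γ hγ => ?_
  rw [mem_ball_zero_iff, Real.norm_eq_abs, abs_lt] at hγ
  have hexp {t : ℝ} (ht : t * γ ≤ s * r) :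
      ‖(Real.exp (2 * Real.pi * t * γ) : ℂ)‖ ≤ Real.exp (2 * Real.pi * s * r) := by
    rw [norm_real, Real.norm_of_nonneg (Real.exp_pos _).le, Real.exp_le_exp, mul_assoc _ t,
      mul_assoc _ s]
    gcongr
  have hpi : ‖(2 * Real.pi * I : ℂ)⁻¹‖ ≤ 1 := by
    rw [norm_inv]
    have htwo_pi : 1 ≤ 2 * Real.pi := by linarith [Real.pi_gt_three]
    exact inv_le_one_of_one_le₀ (by simpa [abs_of_pos Real.pi_pos] using htwo_pi)
  calc ‖(PPM.ofLineCoeffs hc hd s).mass γ‖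
      ≤ 1 * (‖c γ‖ * ‖(Real.exp (2 * Real.pi * -s * γ) : ℂ)‖ +
          ‖d γ‖ * ‖(Real.exp (2 * Real.pi * s * γ) : ℂ)‖) := by
        rw [← norm_mul (c γ), ← norm_mul (d γ)]
        refine (norm_mul_le _ _).trans ?_
        gcongr
        exact norm_sub_le _ _
    _ ≤ (‖c γ‖ + ‖d γ‖) * Real.exp (2 * Real.pi * s * r) := by
        rw [one_mul, add_mul]
        gcongr
        · exact hexp (by nlinarith)
        · exact hexp (by gcongr; exact hγ.2.le)

theorem IsZeroCounting.isFT_ofLineCoeffs {f : ℂ → ℂ} {μ : PPM ℝ} (hμ : IsZeroCounting f μ)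
    (hf : Differentiable ℂ f) (hne : ∃ z, f z ≠ 0) (hreal : ∀ z, f z = 0 → z.im = 0)
    (hm : IsTranslationBounded fun x => analyticOrderNatAt f x)
    (hlog : ∀ δ > 0, ∃ M, ∀ z : ℂ, |z.im| ≤ s → (∀ w ∈ ball z δ, f w ≠ 0) → ‖logDeriv f z‖ ≤ M)
    (hs : 0 < s) (hc : Summable fun γ => ‖c γ‖) (hd : Summable fun γ => ‖d γ‖)
    (hcf : ∀ x : ℝ, HasSum (fun γ => c γ * 𝐞 (γ * x)) (logDeriv f (x + (-s : ℝ) * I)))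
    (hdf : ∀ x : ℝ, HasSum (fun γ => d γ * 𝐞 (γ * x)) (logDeriv f (x + s * I))) :
    IsFT μ (PPM.ofLineCoeffs hc hd s) := fun φ hφ => by
  have hφ2 : ContDiff ℝ 2 φ := φ.smooth 2
  obtain ⟨C, hC⟩ := exists_norm_fourierLaplace_le hφ2 hφ s
  have hlines := ((hasSum_integral_mul_fourierLaplace hc hcf hφ2 hφ (-s)).sub
    (hasSum_integral_mul_fourierLaplace hd hdf hφ2 hφ s)).mul_left (2 * Real.pi * I)⁻¹
  rw [← tsum_analyticOrderNatAt_mul_eq_sub_integral hf hne hreal hm hlog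
    (differentiable_fourierLaplace φ.continuous hφ) hC hs,
    inv_mul_cancel_left₀ two_pi_I_ne_zero] at hlines
  calc μ.pair (FourierTransform.fourierCLE ℂ (SchwartzMap ℝ ℂ) φ)
      = ∑' x : ℝ, analyticOrderNatAt f x * fourierLaplace φ x := by
        refine tsum_congr fun x => ?_
        rw [hμ.mass_eq_analyticOrderNatAt hf hne, fourierLaplace_ofReal]
        rfl
    _ = (PPM.ofLineCoeffs hc hd s).pair φ := by
        rw [← hlines.tsum_eq]
        refine tsum_congr fun γ => ?_
        rw [PPM.ofLineCoeffs]
        ring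

theorem IsZeroCounting.exists_isFT_var_le {q : ℕ → ℂ} {ω : ℕ → ℝ} {B : ℝ} {μ : PPM ℝ}
    (hμ : IsZeroCounting (dserC q ω) μ) (hq : Summable fun i => ‖q i‖) (hB : ∀ i, |ω i| ≤ B)
    (hne : ∃ z, dserC q ω z ≠ 0) (hreal : ∀ z, dserC q ω z = 0 → z.im = 0) (hs : 0 < s) :
    ∃ ν : PPM ℝ, IsFT μ ν ∧ ∃ C : ℝ, ∀ r : ℝ,
      ν.var (ball 0 r) ≤ ENNReal.ofReal (C * Real.exp (2 * Real.pi * s * r)) := by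
  obtain ⟨κ, hκ, hmin⟩ := exists_pos_le_norm_dserC hq hB hne s hs
  have hline {t : ℝ} (ht : |t| = s) :
      ∃ N, WienerNormLE (fun x => logDeriv (dserC q ω) (x + t * I)) N := by
    refine exists_wienerNormLE_logDeriv_dserC_line hq hB hκ fun x => ?_
    have him : |(x + t * I : ℂ).im| = s := by simpa using ht
    exact hmin _ him.le fun w hw => ne_zero_of_mem_ball_abs_im hreal (him.symm ▸ hw)
  obtain ⟨-, c, hc, -, hcf⟩ := hline ((abs_neg s).trans (abs_of_pos hs))
  obtain ⟨-, d, hd, -, hdf⟩ := hline (abs_of_pos hs)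
  exact ⟨PPM.ofLineCoeffs hc hd s,
    hμ.isFT_ofLineCoeffs (differentiable_dserC hq hB) hne hreal
      (isTranslationBounded_analyticOrderNatAt_dserC hq hB hne hreal)
      (fun δ hδ => exists_norm_logDeriv_dserC_le hq hB hne s hδ) hs hc hd hcf hdf,
    PPM.exists_var_ofLineCoeffs_le hc hd hs.le⟩

end DualMeasure

/-- Let `Q` be a Dirichlet series with absolutely summable coefficients and
bounded countable spectrum, not identically zero and with only real zeros, and let `μ_A` be
the counting measure of its zero multiset. Then `μ_A` is temperate, its Fourier transform is
a pure point measure `μ̂_A`, and for every `s > 0` there is `C(s)` with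
`|μ̂_A|((-r,r)) ≤ C(s) e^{2πsr}` for all `r > 0`. -/
theorem statement18 (q : ℕ → ℂ) (ω : ℕ → ℝ)
    (hq : Summable fun i => ‖q i‖) (hω : IsBounded (Set.range ω))
    (hne : ∃ z : ℂ, dserC q ω z ≠ 0)
    (hreal : ∀ z : ℂ, dserC q ω z = 0 → z.im = 0)
    (μ : PPM ℝ) (hμ : IsZeroCounting (dserC q ω) μ) :
    μ.temperate ∧
    ∃ νh : PPM ℝ, IsFT μ νh ∧ νh.locFinite ∧
      ∀ s : ℝ, 0 < s → ∃ C : ℝ, ∀ r : ℝ, 0 < r →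
        νh.var (ball (0:ℝ) r) ≤ ENNReal.ofReal (C * Real.exp (2 * Real.pi * s * r)) := by
  obtain ⟨B, hB⟩ := hω.exists_norm_le
  replace hB (i : ℕ) : |ω i| ≤ B := hB (ω i) (Set.mem_range_self i)
  have hdiff := differentiable_dserC hq hB
  have htb := isTranslationBounded_analyticOrderNatAt_dserC hq hB hne hreal
  refine ⟨htb.temperate (hμ.mass_eq_analyticOrderNatAt hdiff hne), ?_⟩
  choose ν hFT C hC using fun s (hs : 0 < s) => hμ.exists_isFT_var_le hq hB hne hreal hs
  have hfin (s : ℝ) (hs : 0 < s) : (ν s hs).locFinite :=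
    PPM.locFinite_of_forall_pos fun r _ => (hC s hs r).trans_lt ENNReal.ofReal_lt_top
  refine ⟨ν 1 one_pos, hFT 1 one_pos, hfin 1 one_pos, fun s hs => ⟨C s hs, fun r _ => ?_⟩⟩
  rw [(hFT 1 one_pos).unique (hFT s hs) (hfin 1 one_pos) (hfin s hs)]
  exact hC s hs r

end
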